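/- For every positive integer l and every real t, Σ_{n≥0} f^O_{n,2l} · t^{2n}/(2n)! = (1/2)·[ (1/2)·det_{0≤j,k<l}( I_{j−k}(2t) + I_{j+k}(2t) ) + det_{0≤j,k<l−1}( I_{j−k}(2t) − I_{j+k+2}(2t) ) ], where the second determinant is of size (l−1)×(l−1) (equal to 1 when l = 1). -/

import Mathlib

noncomputable section

/-- `lisLE π l` means the longest increasing subsequence of the permutation `π`
has length at most `l`. -/
def lisLE {N : ℕ} (π : Equiv.Perm (Fin N)) (l : ℕ) : Prop :=
  ∀ (k : ℕ) (f : Fin k → Fin N), StrictMono f → StrictMono (fun i => π (f i)) → k ≤ l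

/-- `f^O_{n,l}`: the number of fixed-point-free involutions of `{1,…,2n}` whose
longest increasing subsequence has length at most `l`. -/
def fpfInvCount (n l : ℕ) : ℕ :=
  Nat.card {π : Equiv.Perm (Fin (2 * n)) //
    π * π = 1 ∧ (∀ x, π x ≠ x) ∧ lisLE π l}

/-- The modified Bessel function of the first kind:
`besselI j t = I_j(2t) = Σ_{m≥0} t^{2m+|j|}/(m!·(m+|j|)!)`. -/
def besselI (j : ℤ) (t : ℝ) : ℝ :=
  ∑' m : ℕ, t ^ (2 * m + j.natAbs) /
    ((Nat.factorial m : ℝ) * (Nat.factorial (m + j.natAbs) : ℝ))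

section

open Finset PowerSeries

/-- Laurent polynomials in `k` variables with real coefficients. -/
abbrev Laur (k : ℕ) := AddMonoidAlgebra ℝ (Fin k → ℤ)

/-- The variable `x_i ^ d`. -/
def Laur.pw {k : ℕ} (i : Fin k) (d : ℤ) : Laur k := AddMonoidAlgebra.single (Pi.single i d) 1

/-- The linear functional sending `x ^ d` to `∏ i, G (d i)`. -/
def tensorFunctional {k : ℕ} (G : ℤ → ℝ⟦X⟧) : Laur k →ₗ[ℝ] ℝ⟦X⟧ :=
  (Finsupp.linearCombination ℝ fun d : Fin k → ℤ => ∏ i, G (d i)) ∘ₗ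
    (AddMonoidAlgebra.coeffLinearEquiv ℝ).toLinearMap

lemma tensorFunctional_single {k : ℕ} (G : ℤ → ℝ⟦X⟧) (d : Fin k → ℤ) (c : ℝ) :
    tensorFunctional G (AddMonoidAlgebra.single d c) = c • ∏ i, G (d i) := by
  simp [tensorFunctional]

lemma Laur.pw_mul {k : ℕ} (i : Fin k) (d e : ℤ) : pw i d * pw i e = pw i (d + e) := by
  simp [pw, AddMonoidAlgebra.single_mul_single, Pi.single_add]

lemma Laur.pw_zero {k : ℕ} (i : Fin k) : pw i 0 = 1 := by
  simp [pw, AddMonoidAlgebra.one_def]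

lemma Laur.pw_pow {k : ℕ} (i : Fin k) (d : ℤ) (n : ℕ) : pw i d ^ n = pw i (n * d) := by
  induction n with
  | zero => simp [pw_zero]
  | succ n ih => rw [pow_succ, ih, pw_mul]; congr 1; push_cast; ring

lemma Laur.prod_pw {k : ℕ} (d : Fin k → ℤ) (c : Fin k → ℝ) :
    ∏ i, (AddMonoidAlgebra.single (Pi.single i (d i)) (c i) : Laur k) =
      AddMonoidAlgebra.single d (∏ i, c i) := by
  rw [AddMonoidAlgebra.prod_single, Finset.univ_sum_single]

lemma tensorFunctional_prod_sum {k : ℕ} {S : Type*} [Fintype S] (G : ℤ → ℝ⟦X⟧)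
    (c : Fin k → S → ℝ) (d : Fin k → S → ℤ) :
    tensorFunctional G (∏ i, ∑ s, AddMonoidAlgebra.single (Pi.single i (d i s)) (c i s)) =
      ∏ i, ∑ s, c i s • G (d i s) := by
  classical
  rw [Finset.prod_univ_sum, Finset.prod_univ_sum, map_sum]
  refine Finset.sum_congr rfl fun s _ => ?_
  rw [Laur.prod_pw (fun i => d i (s i)) (fun i => c i (s i)), tensorFunctional_single,
    Finset.prod_smul]

lemma Derivation.leibniz_finset_prod {R A ι : Type*} [CommRing R] [CommRing A] [Algebra R A]
    [DecidableEq ι] (D : Derivation R A A) (s : Finset ι) (f : ι → A) :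
    D (∏ i ∈ s, f i) = ∑ i ∈ s, (∏ j ∈ s.erase i, f j) * D (f i) := by
  induction s using Finset.induction_on with
  | empty => simp
  | insert a s ha ih =>
    rw [Finset.prod_insert ha, Derivation.leibniz, ih, Finset.sum_insert ha,
      Finset.erase_insert ha, smul_eq_mul, smul_eq_mul, Finset.mul_sum, add_comm]
    congr 1
    refine Finset.sum_congr rfl fun i hi => ?_
    have hia : i ≠ a := fun h => ha (h ▸ hi)
    rw [Finset.erase_insert_of_ne hia.symm, Finset.prod_insert (by simp [ha]), mul_assoc]

lemma tensorFunctional_derivative {k : ℕ} (G : ℤ → ℝ⟦X⟧)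
    (hG : ∀ d, d⁄dX ℝ (G d) = G (d + 1) + G (d - 1)) (f : Laur k) :
    d⁄dX ℝ (tensorFunctional G f) =
      tensorFunctional G ((∑ i, (Laur.pw i 1 + Laur.pw i (-1))) * f) := by
  induction f using AddMonoidAlgebra.induction_linear with
  | zero => simp
  | add f g hf hg => rw [map_add, map_add, mul_add, map_add, hf, hg]
  | single d c =>
    rw [tensorFunctional_single, Finset.sum_mul, map_sum, Derivation.map_smul, 
      Derivation.leibniz_finset_prod, Finset.smul_sum]
    refine Finset.sum_congr rfl fun i _ => ?_
    have key : ∀ e : ℤ, tensorFunctional G (Laur.pw i e * AddMonoidAlgebra.single d c) =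
        c • ((∏ j ∈ univ.erase i, G (d j)) * G (d i + e)) := by
      intro e
      rw [Laur.pw, AddMonoidAlgebra.single_mul_single, tensorFunctional_single, one_mul,
        ← Finset.mul_prod_erase univ _ (Finset.mem_univ i), mul_comm]
      congr 2
      · refine Finset.prod_congr rfl fun j hj => ?_
        simp [Finset.ne_of_mem_erase hj]
      · simp [add_comm]
    rw [add_mul, map_add, key, key, hG, ← smul_add, ← mul_add]
    rfl

open Classical in
/-- Sum of the weights `E` of the end points of all `n`-step walks in the monotone cone
starting from `x`, each step incrementing one coordinate. -/
def walkSum {m : ℕ} (E : (Fin m → ℕ) → ℝ) : ℕ → (Fin m → ℕ) → ℝ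
  | 0, x => E x
  | n + 1, x => ∑ j, if Monotone (x + Pi.single j 1) then walkSum E n (x + Pi.single j 1) else 0

/-- The alternant `det (z_i ^ (x_j + j))`. -/
def alternant {R : Type*} [CommRing R] {m : ℕ} (z : Fin m → R) (x : Fin m → ℕ) : R :=
  (Matrix.of fun i j : Fin m => z i ^ (x j + j)).det

lemma alternant_apply {R : Type*} [CommRing R] {m : ℕ} (z : Fin m → R) (x : Fin m → ℕ) :
    alternant z x = ∑ σ : Equiv.Perm (Fin m), ((Equiv.Perm.sign σ : ℤ) : R) *
      ∏ j, z (σ j) ^ (x j + j) := by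
  rw [alternant, Matrix.det_apply']; rfl

lemma sum_mul_alternant {R : Type*} [CommRing R] {m : ℕ} (z : Fin m → R) (x : Fin m → ℕ) :
    (∑ i, z i) * alternant z x = ∑ j, alternant z (x + Pi.single j 1) := by
  simp_rw [alternant_apply]
  rw [Finset.sum_comm, Finset.mul_sum]
  refine Finset.sum_congr rfl fun σ _ => ?_
  rw [← Finset.mul_sum, mul_left_comm, ← Equiv.sum_comp σ, Finset.sum_mul]
  congr 1
  refine Finset.sum_congr rfl fun j _ => ?_
  rw [← Finset.mul_prod_erase univ _ (mem_univ j)]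
  refine Eq.trans ?_ (Finset.mul_prod_erase univ _ (mem_univ j))
  rw [← mul_assoc, ← pow_succ']
  congr 1
  · congr 1; simp; ring
  · refine Finset.prod_congr rfl fun i hi => ?_
    simp [Finset.ne_of_mem_erase hi]

lemma alternant_eq_zero {R : Type*} [CommRing R] {m : ℕ} (z : Fin m → R) {x : Fin m → ℕ}
    (hx : Monotone x) {j : Fin m} (h : ¬ Monotone (x + Pi.single j 1)) :
    alternant z (x + Pi.single j 1) = 0 := by
  simp only [Monotone, not_forall, not_le] at h
  obtain ⟨a, b, hab, hlt⟩ := h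
  have h1 := hx hab
  have haj : a = j := by
    by_contra hne
    simp [hne] at hlt
    omega
  subst haj
  have hne : a ≠ b := by rintro rfl; simp at hlt
  have hltab : a < b := lt_of_le_of_ne hab hne
  have hb : x b = x a := by
    simp [hne.symm] at hlt
    omega
  have hlt' : (a : ℕ) < b := hltab
  have hc : (a : ℕ) + 1 < m := by have := b.2; omega
  let c : Fin m := ⟨a + 1, hc⟩
  have hac : a ≠ c := by intro h; have := congrArg Fin.val h; simp [c] at this
  have hxc : x c = x a := by
    apply le_antisymm
    · rw [← hb]; apply hx; show (a : ℕ) + 1 ≤ b; omega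
    · apply hx; show (a : ℕ) ≤ a + 1; omega
  apply Matrix.det_zero_of_column_eq hac
  intro i
  simp only [Matrix.of_apply, Pi.add_apply, Pi.single_eq_same, Pi.single_eq_of_ne hac.symm, hxc]
  congr 1
  simp [c]; ring

lemma coeff_alternant {R : Type*} [CommRing R] [Algebra ℝ R] {m : ℕ} (z : Fin m → R)
    (L : R →ₗ[ℝ] ℝ⟦X⟧) (hL : ∀ f, d⁄dX ℝ (L f) = L ((∑ i, z i) * f)) (n : ℕ)
    (x : Fin m → ℕ) (hx : Monotone x) :
    walkSum (fun x => constantCoeff (L (alternant z x))) n x =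
      n.factorial * coeff n (L (alternant z x)) := by
  induction n generalizing x with
  | zero => simp [walkSum]
  | succ n ih =>
    have h1 := congrArg (coeff n) (hL (alternant z x))
    rw [coeff_derivative, sum_mul_alternant, map_sum, map_sum] at h1
    rw [Nat.factorial_succ, walkSum]
    push_cast
    rw [mul_comm ((n : ℝ) + 1), mul_assoc, mul_comm ((n : ℝ) + 1), h1, Finset.mul_sum]
    refine Finset.sum_congr rfl fun j _ => ?_
    split_ifs with h
    · exact ih _ h
    · rw [alternant_eq_zero z hx h]; simp

lemma alternant_zero {R : Type*} [CommRing R] {m : ℕ} (z : Fin m → R) :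
    alternant z 0 = (Matrix.vandermonde z).det := by
  simp [alternant, Matrix.vandermonde]

lemma det_vandermonde_eq_ite {R : Type*} [CommRing R] {m : ℕ} (z : Fin m → R) :
    (Matrix.vandermonde z).det = ∏ i, ∏ j, if i < j then z j - z i else 1 := by
  rw [Matrix.det_vandermonde]
  refine Finset.prod_congr rfl fun i _ => ?_
  rw [← Finset.prod_filter]
  congr 1
  ext; simp

lemma det_vandermonde_append {R : Type*} [CommRing R] {m n : ℕ} (u : Fin m → R) (w : Fin n → R) :
    (Matrix.vandermonde (Fin.append u w)).det =
      (Matrix.vandermonde u).det * (Matrix.vandermonde w).det * ∏ i, ∏ j, (w j - u i) := by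
  simp only [det_vandermonde_eq_ite]
  rw [Fin.prod_univ_add]
  simp only [Fin.prod_univ_add, Fin.append_left, Fin.append_right]
  have h1 : ∀ (i : Fin m) (j : Fin n), Fin.castAdd n i < Fin.natAdd m j := by
    intro i j; rw [Fin.lt_def]; simp; omega
  have h2 : ∀ (i : Fin m) (j : Fin n), ¬ Fin.natAdd m j < Fin.castAdd n i := by
    intro i j; rw [Fin.lt_def]; simp; omega
  have h3 : ∀ i j : Fin m, Fin.castAdd n i < Fin.castAdd n j ↔ i < j := by
    intro i j; rw [Fin.lt_def, Fin.lt_def]; simp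
  have h4 : ∀ i j : Fin n, Fin.natAdd m i < Fin.natAdd m j ↔ i < j := by
    intro i j; rw [Fin.lt_def, Fin.lt_def]; simp
  simp only [h1, h2, h3, h4, if_true, if_false, Finset.prod_mul_distrib, Finset.prod_const_one]
  ring

lemma prod_prod_eq_diag_mul {R : Type*} [CommRing R] {m : ℕ} (f : Fin m → Fin m → R) :
    ∏ i, ∏ j, f i j = (∏ i, f i i) * ∏ i, ∏ j, if i < j then f i j * f j i else 1 := by
  have h : ∀ i j, f i j = (if i = j then f i i else 1) * ((if i < j then f i j else 1) *
      (if j < i then f i j else 1)) := by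
    intro i j
    rcases lt_trichotomy i j with h | h | h
    · simp [h, h.ne, h.not_gt]
    · simp [h]
    · simp [h, h.ne', h.not_gt]
  have h' : ∀ i j, (if i < j then f i j * f j i else 1) = (if i < j then f i j else 1) *
      (if i < j then f j i else 1) := by
    intro i j; split_ifs <;> simp
  conv_lhs => enter [2, i, 2, j]; rw [h]
  simp only [h', Finset.prod_mul_distrib]
  rw [Finset.prod_comm (f := fun i j => if j < i then f i j else 1)]
  simp

lemma det_vandermonde_append_inv {R : Type*} [CommRing R] {l : ℕ} (x x' : Fin l → R)
    (h : ∀ i, x i * x' i = 1) :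
    ∃ s : ℝ, s ≠ 0 ∧ ∀ [Algebra ℝ R], (Matrix.vandermonde (Fin.append x x')).det =
      s • ((∏ i, (x' i - x i)) * (Matrix.vandermonde fun i => x i + x' i).det ^ 2) := by
  refine ⟨∏ i : Fin l, ∏ j : Fin l, if i < j then -1 else 1, ?_, ?_⟩
  · simp only [ne_eq, Finset.prod_eq_zero_iff, not_exists, not_and]
    intro i _ j _; split_ifs <;> norm_num
  intro _
  rw [det_vandermonde_append, prod_prod_eq_diag_mul fun i j => x' j - x i]
  simp only [det_vandermonde_eq_ite]
  rw [sq, Algebra.smul_def, map_prod]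
  simp only [map_prod]
  rw [mul_left_comm, mul_left_comm _ (∏ i, (x' i - x i))]
  congr 1
  simp only [← Finset.prod_mul_distrib]
  refine Finset.prod_congr rfl fun i _ => Finset.prod_congr rfl fun j _ => ?_
  split_ifs
  · simp only [map_neg, map_one]
    have hi := h i
    have hj := h j
    have e1 : (x j - x i) * (x' j - x i) = x i * ((x i + x' i) - (x j + x' j)) := by
      linear_combination hj - hi
    have e2 : (x' j - x' i) * (x' i - x j) = x' i * ((x j + x' j) - (x i + x' i)) := by
      linear_combination -hj + hi
    linear_combination (x' j - x' i) * (x' i - x j) * e1 +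
      x i * ((x i + x' i) - (x j + x' j)) * e2 -
      ((x i + x' i) - (x j + x' j)) ^ 2 * hi
  · simp

lemma det_vandermonde_append_inv_one_neg_one {R : Type*} [CommRing R] {l : ℕ} (x x' : Fin l → R)
    (h : ∀ i, x i * x' i = 1) :
    ∃ s : ℝ, s ≠ 0 ∧ ∀ [Algebra ℝ R],
      (Matrix.vandermonde (Fin.append (Fin.append x x') ![1, -1])).det =
      s • ((∏ i, (x' i - x i)) * ((∏ i, (x i - x' i)) *
        (Matrix.vandermonde fun i => x i + x' i).det) ^ 2) := by
  obtain ⟨s, hs, hs'⟩ := det_vandermonde_append_inv x x' h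
  refine ⟨s * (-2 * ∏ i : Fin l, (-1)), mul_ne_zero hs (mul_ne_zero (by norm_num) (by
    simp)), ?_⟩
  intro _
  rw [det_vandermonde_append, hs']
  have e : (∏ i, ∏ j : Fin 2, (![1, -1] j - Fin.append x x' i)) =
      (∏ i : Fin l, (-1)) * (∏ i, (x i - x' i)) ^ 2 := by
    rw [Fin.prod_univ_add, ← Finset.prod_pow, ← Finset.prod_mul_distrib, ← Finset.prod_mul_distrib]
    refine Finset.prod_congr rfl fun i _ => ?_
    simp only [Fin.append_left, Fin.append_right, Fin.prod_univ_two, Matrix.cons_val_zero,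
      Matrix.cons_val_one]
    linear_combination (x i * x' i - 1) * h i
  rw [e]
  have e2 : (Matrix.vandermonde ![(1 : R), -1]).det = -2 := by
    simp [Matrix.det_fin_two, Matrix.vandermonde]; norm_num
  rw [e2]
  simp only [Algebra.smul_def, map_mul, map_prod, map_neg, map_one, map_ofNat]
  ring
/-- `n`-fold application of the nearest neighbour sum to `g`. -/
def iterNeighbour (g : ℤ → ℝ) : ℕ → ℤ → ℝ
  | 0, d => g d
  | n + 1, d => iterNeighbour g n (d + 1) + iterNeighbour g n (d - 1)

/-- The exponential generating function of `iterNeighbour`. -/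
def heatSeries (g : ℤ → ℝ) (d : ℤ) : ℝ⟦X⟧ :=
  PowerSeries.mk fun n => iterNeighbour g n d / n.factorial

lemma heatSeries_derivative (g : ℤ → ℝ) (d : ℤ) :
    d⁄dX ℝ (heatSeries g d) = heatSeries g (d + 1) + heatSeries g (d - 1) := by
  ext n
  rw [coeff_derivative, map_add]
  simp only [heatSeries, coeff_mk, iterNeighbour, Nat.factorial_succ]
  push_cast
  field_simp

lemma constantCoeff_heatSeries (g : ℤ → ℝ) (d : ℤ) : constantCoeff (heatSeries g d) = g d := by
  rw [← coeff_zero_eq_constantCoeff_apply]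
  simp [heatSeries, iterNeighbour]

lemma iterNeighbour_sub (g h : ℤ → ℝ) (c : ℝ) (hgh : ∀ d, g (d - 1) - g (d + 1) = c * h d)
    (n : ℕ) (d : ℤ) :
    iterNeighbour g n (d - 1) - iterNeighbour g n (d + 1) = c * iterNeighbour h n d := by
  induction n generalizing d with
  | zero => exact hgh d
  | succ n ih =>
    simp only [iterNeighbour]
    rw [mul_add, ← ih, ← ih]
    ring_nf

lemma heatSeries_sub (g h : ℤ → ℝ) (c : ℝ) (hgh : ∀ d, g (d - 1) - g (d + 1) = c * h d)
    (d : ℤ) : heatSeries g (d - 1) - heatSeries g (d + 1) = c • heatSeries h d := by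
  ext n
  simp only [heatSeries, map_sub, coeff_mk, map_smul, smul_eq_mul]
  rw [← sub_div, iterNeighbour_sub g h c hgh]
  ring

/-- The formal power series of `t ↦ I_d(2t)`. -/
def besselSeries : ℤ → ℝ⟦X⟧ := heatSeries fun d => if d = 0 then 1 else 0

/-- The sign of `d` for odd `d`, and `0` for even `d`. -/
def oddSign (d : ℤ) : ℝ := if Odd d then (d.sign : ℝ) else 0

lemma oddSign_sub (d : ℤ) :
    oddSign (d - 1) - oddSign (d + 1) = -2 * if d = 0 then 1 else 0 := by
  unfold oddSign
  by_cases h : d = 0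
  · subst h; norm_num
  have e : Odd (d - 1) ↔ Odd (d + 1) := by
    rw [show d + 1 = d - 1 + 2 by ring]; simp [parity_simps]
  rw [if_neg h, if_congr e rfl rfl]
  split_ifs with h1
  · rcases lt_or_gt_of_ne h with h2 | h2
    · have : d ≠ -1 := by rintro rfl; revert h1; decide
      rw [Int.sign_eq_neg_one_of_neg (by omega), Int.sign_eq_neg_one_of_neg (by omega)]; simp
    · have : d ≠ 1 := by rintro rfl; revert h1; decide
      rw [Int.sign_eq_one_of_pos (by omega), Int.sign_eq_one_of_pos (by omega)]; simp
  · simp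

lemma heatSeries_oddSign_sub (d : ℤ) :
    heatSeries oddSign (d - 1) - heatSeries oddSign (d + 1) = (-2 : ℝ) • besselSeries d :=
  heatSeries_sub _ _ _ oddSign_sub d

lemma iterNeighbour_single_of_forall_ne (n : ℕ) (d : ℤ)
    (h : ∀ p q : ℕ, p + q = n → (p : ℤ) - q ≠ d) :
    iterNeighbour (fun d => if d = 0 then 1 else 0) n d = 0 := by
  induction n generalizing d with
  | zero => 
    have := h 0 0 rfl
    simp at this
    simp [iterNeighbour, Ne.symm this]
  | succ n ih =>
    rw [iterNeighbour, ih, ih, add_zero]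
    · intro p q hpq hd
      exact h (p + 1) q (by omega) (by push_cast; omega)
    · intro p q hpq hd
      exact h p (q + 1) (by omega) (by push_cast; omega)

lemma iterNeighbour_single (n p q : ℕ) (h : p + q = n) :
    iterNeighbour (fun d => if d = 0 then 1 else 0) n ((p : ℤ) - q) = n.choose p := by
  induction n generalizing p q with
  | zero =>
    obtain ⟨rfl, rfl⟩ : p = 0 ∧ q = 0 := by omega
    simp [iterNeighbour]
  | succ n ih =>
    rw [iterNeighbour]
    have h1 : ∀ p q : ℕ, p + q = n + 1 → iterNeighbour (fun d => if d = 0 then 1 else 0) n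
        ((p : ℤ) - q + 1) = n.choose p := by
      intro p q hpq
      rcases q with _ | q
      · rw [iterNeighbour_single_of_forall_ne, Nat.choose_eq_zero_of_lt (by omega)]
        · simp
        · intro a b hab h'; push_cast at h'; omega
      · rw [← ih p q (by omega)]; congr 1; push_cast; ring
    have h2 : iterNeighbour (fun d => if d = 0 then 1 else 0) n
        ((p : ℤ) - q - 1) = n.choose q := by
      rcases p with _ | p
      · rw [iterNeighbour_single_of_forall_ne, Nat.choose_eq_zero_of_lt (by omega)]
        · simp
        · intro a b hab h'; push_cast at h'; omega
      · have hs : n.choose q = n.choose p := Nat.choose_symm_of_eq_add (by omega)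
        rw [hs, ← ih p q (by omega)]; congr 1; push_cast; ring
    rw [h1 p q h, h2]
    rcases p with _ | p
    · obtain rfl : q = n + 1 := by omega
      simp
    · have hs : n.choose q = n.choose p := Nat.choose_symm_of_eq_add (by omega)
      rw [hs, Nat.choose_succ_succ]; push_cast; ring

lemma coeff_besselSeries (m : ℕ) (d : ℤ) :
    coeff (2 * m + d.natAbs) (besselSeries d) =
      1 / ((m.factorial : ℝ) * ((m + d.natAbs).factorial : ℝ)) := by
  rw [besselSeries, heatSeries, coeff_mk]
  have : ∃ p q : ℕ, p + q = 2 * m + d.natAbs ∧ (p : ℤ) - q = d ∧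
      p.factorial * q.factorial = m.factorial * (m + d.natAbs).factorial := by
    rcases Int.natAbs_eq d with h | h
    · exact ⟨m + d.natAbs, m, by omega, by omega, mul_comm _ _⟩
    · exact ⟨m, m + d.natAbs, by omega, by omega, rfl⟩
  obtain ⟨p, q, h1, h2, h3⟩ := this
  have h4 := iterNeighbour_single _ p q h1
  rw [h2] at h4
  rw [← Nat.cast_mul, ← h3, h4, ← h1]
  have hp := p.factorial_ne_zero
  have hq := q.factorial_ne_zero
  rw [div_eq_div_iff (by positivity) (by positivity)]
  norm_cast
  have := Nat.choose_mul_factorial_mul_factorial (show p ≤ p + q by omega)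
  rw [Nat.add_sub_cancel_left] at this
  rw [← mul_assoc, this, one_mul]

lemma coeff_besselSeries_of_notMem (n : ℕ) (d : ℤ) (h : n ∉ Set.range fun m => 2 * m + d.natAbs) :
    coeff n (besselSeries d) = 0 := by
  rw [besselSeries, heatSeries, coeff_mk, iterNeighbour_single_of_forall_ne, zero_div]
  intro p q hpq hd
  apply h
  refine ⟨min p q, ?_⟩
  simp only
  omega

lemma besselSeries_neg (d : ℤ) : besselSeries (-d) = besselSeries d := by
  ext n
  by_cases h : n ∈ Set.range fun m => 2 * m + d.natAbs
  · obtain ⟨m, rfl⟩ := h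
    have := coeff_besselSeries m (-d)
    rw [Int.natAbs_neg] at this
    simp only [this, coeff_besselSeries]
  · rw [coeff_besselSeries_of_notMem _ _ h, coeff_besselSeries_of_notMem]
    rwa [Int.natAbs_neg]

/-- The power series `f` converges absolutely at `t` with sum `v`. -/
def AbsConvAt (t : ℝ) (f : ℝ⟦X⟧) (v : ℝ) : Prop :=
  (Summable fun n => ‖coeff n f * t ^ n‖) ∧ HasSum (fun n => coeff n f * t ^ n) v

lemma AbsConvAt.add {t v w : ℝ} {f g : ℝ⟦X⟧} (hf : AbsConvAt t f v) (hg : AbsConvAt t g w) :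
    AbsConvAt t (f + g) (v + w) := by
  have h := hf.2.add hg.2
  refine ⟨?_, ?_⟩
  · refine Summable.of_nonneg_of_le (fun _ => norm_nonneg _) (fun n => ?_) (hf.1.add hg.1)
    rw [map_add, add_mul]; exact norm_add_le _ _
  · simpa [add_mul] using h

lemma AbsConvAt.smul {t v : ℝ} {f : ℝ⟦X⟧} (c : ℝ) (hf : AbsConvAt t f v) :
    AbsConvAt t (c • f) (c * v) := by
  have h := hf.2.mul_left c
  refine ⟨?_, ?_⟩
  · simpa [mul_assoc, abs_mul] using hf.1.mul_left |c|
  · simpa [mul_assoc] using h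

lemma AbsConvAt.mul {t v w : ℝ} {f g : ℝ⟦X⟧} (hf : AbsConvAt t f v) (hg : AbsConvAt t g w) :
    AbsConvAt t (f * g) (v * w) := by
  have e : (fun n => coeff n (f * g) * t ^ n) = fun n => ∑ kl ∈ antidiagonal n,
      (coeff kl.1 f * t ^ kl.1) * (coeff kl.2 g * t ^ kl.2) := by
    funext n
    rw [coeff_mul, Finset.sum_mul]
    refine Finset.sum_congr rfl fun kl hkl => ?_
    rw [← mem_antidiagonal.1 hkl, pow_add]; ring
  have hs := summable_norm_sum_mul_antidiagonal_of_summable_norm hf.1 hg.1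
  refine ⟨?_, ?_⟩
  · refine hs.congr fun n => ?_
    rw [← congrFun e n]
  · have := tsum_mul_tsum_eq_tsum_sum_antidiagonal_of_summable_norm hf.1 hg.1
    rw [hf.2.tsum_eq, hg.2.tsum_eq] at this
    rw [e, this]
    exact hs.of_norm.hasSum

lemma absConvAt_one (t : ℝ) : AbsConvAt t 1 1 := by
  have h : (fun n => coeff n (1 : ℝ⟦X⟧) * t ^ n) = Pi.single 0 1 := by
    funext n
    rw [coeff_one]
    by_cases hn : n = 0
    · subst hn; simp
    · simp [hn]
  constructor
  · refine summable_of_ne_finset_zero (s := {0}) fun b hb => ?_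
    have : b ≠ 0 := by simpa using hb
    simp [coeff_one, this]
  · rw [h]; exact hasSum_pi_single 0 1

lemma AbsConvAt.sum {ι : Type*} {t : ℝ} {v : ι → ℝ} {f : ι → ℝ⟦X⟧} (s : Finset ι)
    (h : ∀ i ∈ s, AbsConvAt t (f i) (v i)) : AbsConvAt t (∑ i ∈ s, f i) (∑ i ∈ s, v i) := by
  classical
  induction s using Finset.induction_on with
  | empty => simpa using (absConvAt_one t).smul 0
  | insert a s ha ih =>
    rw [Finset.sum_insert ha, Finset.sum_insert ha]
    exact (h a (mem_insert_self _ _)).add (ih fun i hi => h i (mem_insert_of_mem hi))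

lemma AbsConvAt.prod {ι : Type*} {t : ℝ} {v : ι → ℝ} {f : ι → ℝ⟦X⟧} (s : Finset ι)
    (h : ∀ i ∈ s, AbsConvAt t (f i) (v i)) : AbsConvAt t (∏ i ∈ s, f i) (∏ i ∈ s, v i) := by
  classical
  induction s using Finset.induction_on with
  | empty => simpa using absConvAt_one t
  | insert a s ha ih =>
    rw [Finset.prod_insert ha, Finset.prod_insert ha]
    exact (h a (mem_insert_self _ _)).mul (ih fun i hi => h i (mem_insert_of_mem hi))

lemma AbsConvAt.det {t : ℝ} {l : ℕ} {V : Matrix (Fin l) (Fin l) ℝ} {F : Matrix (Fin l) (Fin l) ℝ⟦X⟧}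
    (h : ∀ i j, AbsConvAt t (F i j) (V i j)) : AbsConvAt t F.det V.det := by
  rw [Matrix.det_apply', Matrix.det_apply']
  refine AbsConvAt.sum _ fun σ _ => ?_
  have := (AbsConvAt.prod univ fun i _ => h (σ i) i).smul ((Equiv.Perm.sign σ : ℤ) : ℝ)
  convert this using 1
  rw [Algebra.smul_def, map_intCast]

lemma absConvAt_besselSeries (t : ℝ) (d : ℤ) : AbsConvAt t (besselSeries d) (besselI d t) := by
  have hinj : Function.Injective fun m : ℕ => 2 * m + d.natAbs := fun a b h => by
    simp only at h; omega
  have hsupp : ∀ n ∉ Set.range fun m : ℕ => 2 * m + d.natAbs,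
      coeff n (besselSeries d) * t ^ n = 0 := fun n hn => by
    rw [coeff_besselSeries_of_notMem n d hn, zero_mul]
  have hsupp' : ∀ n ∉ Set.range fun m : ℕ => 2 * m + d.natAbs,
      ‖coeff n (besselSeries d) * t ^ n‖ = 0 := fun n hn => by
    rw [hsupp n hn, norm_zero]
  have e : ((fun n => coeff n (besselSeries d) * t ^ n) ∘ fun m : ℕ => 2 * m + d.natAbs) =
      fun m : ℕ => t ^ (2 * m + d.natAbs) / ((m.factorial : ℝ) * ((m + d.natAbs).factorial : ℝ)) := by
    funext m
    simp only [Function.comp_apply, coeff_besselSeries]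
    ring
  have hs : Summable fun n => ‖coeff n (besselSeries d) * t ^ n‖ := by
    rw [← hinj.summable_iff hsupp']
    have : ((fun n => ‖coeff n (besselSeries d) * t ^ n‖) ∘ fun m : ℕ => 2 * m + d.natAbs) =
        fun m => ‖((fun n => coeff n (besselSeries d) * t ^ n) ∘
          fun m : ℕ => 2 * m + d.natAbs) m‖ := rfl
    rw [this, e]
    refine Summable.of_nonneg_of_le (fun _ => norm_nonneg _) (fun m => ?_)
      ((Real.summable_pow_div_factorial (t ^ 2)).mul_left (|t| ^ d.natAbs))
    rw [norm_div, norm_pow, Real.norm_eq_abs, pow_add, pow_mul, sq_abs, mul_comm, norm_mul,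
      mul_div_assoc]
    refine mul_le_mul_of_nonneg_left ?_ (by positivity)
    rw [Real.norm_natCast, Real.norm_natCast]
    refine div_le_div_of_nonneg_left (by positivity) (by positivity) ?_
    have h1 : (1 : ℝ) ≤ (m + d.natAbs).factorial := by exact_mod_cast Nat.factorial_pos _
    exact le_mul_of_one_le_right (by positivity) h1
  refine ⟨hs, ?_⟩
  rw [← hinj.hasSum_iff hsupp, e]
  have h2 := hs.of_norm
  rw [← hinj.summable_iff hsupp, e] at h2
  exact h2.hasSum

lemma sum_perm_sum_perm_eq_factorial_smul_det {R : Type*} [CommRing R] {k : ℕ}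
    (C : Fin k → Fin k → R) :
    ∑ σ : Equiv.Perm (Fin k), ∑ τ : Equiv.Perm (Fin k),
      ((Equiv.Perm.sign σ : ℤ) : R) * (((Equiv.Perm.sign τ : ℤ) : R) * ∏ i, C (σ i) (τ i)) =
      (k.factorial : R) * (Matrix.of C).det := by
  have h : ∀ σ : Equiv.Perm (Fin k), ∑ τ : Equiv.Perm (Fin k),
      ((Equiv.Perm.sign σ : ℤ) : R) * (((Equiv.Perm.sign τ : ℤ) : R) * ∏ i, C (σ i) (τ i)) =
      (Matrix.of C).det := by
    intro σ
    rw [← Matrix.det_transpose, Matrix.det_apply']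
    refine Fintype.sum_equiv (Equiv.mulRight σ⁻¹) _ _ fun τ => ?_
    rw [← Equiv.prod_comp σ (fun i => (Matrix.of C).transpose _ i)]
    simp [mul_left_comm, mul_comm]
  rw [Finset.sum_congr rfl fun σ _ => h σ]
  simp [Fintype.card_perm]

lemma tensorFunctional_prod_mul_det_sq {k : ℕ} (G : ℤ → ℝ⟦X⟧) (B : ℤ → ℝ⟦X⟧)
    (hG : ∀ d, G (d - 1) - G (d + 1) = (-2 : ℝ) • B d) (hB : ∀ d, B (-d) = B d)
    (ε : ℝ) (hε : ε * ε = 1) (α : Fin k → ℤ) :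
    tensorFunctional G ((∏ i, (Laur.pw i (-1) - Laur.pw i 1)) *
      (Matrix.of fun i j : Fin k => Laur.pw i (α j) + ε • Laur.pw i (-α j)).det ^ 2) =
      ((k.factorial : ℝ) * (-4 * ε) ^ k) •
        (Matrix.of fun i j : Fin k => B (α i - α j) + ε • B (α i + α j)).det := by
  set p : Fin k → Fin k → Laur k := fun i j => Laur.pw i (α j) + ε • Laur.pw i (-α j) with hp
  have hdet : (Matrix.of p).det = ∑ σ : Equiv.Perm (Fin k),
      ((Equiv.Perm.sign σ : ℤ) : Laur k) * ∏ i, p i (σ i) := by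
    rw [← Matrix.det_transpose, Matrix.det_apply']; rfl
  set C : Fin k → Fin k → ℝ⟦X⟧ := fun a b =>
    (-4 * ε) • (B (α a - α b) + ε • B (α a + α b)) with hC
  have hterm : ∀ σ τ : Equiv.Perm (Fin k),
      tensorFunctional G (∏ i, ((Laur.pw i (-1) - Laur.pw i 1) * (p i (σ i) * p i (τ i)))) =
      ∏ i, C (σ i) (τ i) := by
    intro σ τ
    have e : ∀ i, (Laur.pw i (-1) - Laur.pw i 1) * (p i (σ i) * p i (τ i)) =
        ∑ s : Fin 8, AddMonoidAlgebra.single (Pi.single i (![α (σ i) + α (τ i) - 1,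
          α (σ i) - α (τ i) - 1, α (τ i) - α (σ i) - 1, -(α (σ i) + α (τ i)) - 1,
          α (σ i) + α (τ i) + 1,
          α (σ i) - α (τ i) + 1, α (τ i) - α (σ i) + 1, -(α (σ i) + α (τ i)) + 1] s))
          (![1, ε, ε, ε * ε, -1, -ε, -ε, -(ε * ε)] s) := by
      intro i
      have hs : ∀ (d : ℤ) (c : ℝ), (AddMonoidAlgebra.single (Pi.single i d) c : Laur k) =
          algebraMap ℝ (Laur k) c * Laur.pw i d := by
        intro d c
        rw [← Algebra.smul_def, Laur.pw, AddMonoidAlgebra.smul_single, smul_eq_mul, mul_one]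
      simp only [hs, Fin.sum_univ_eight, hp, Algebra.smul_def]
      simp [-AddMonoidAlgebra.coe_algebraMap, sub_eq_add_neg, ← Laur.pw_mul, map_neg, map_mul]
      ring
    rw [Finset.prod_congr rfl fun i _ => e i, tensorFunctional_prod_sum G
      (fun i s => ![1, ε, ε, ε * ε, -1, -ε, -ε, -(ε * ε)] s) (fun i s => ![α (σ i) + α (τ i) - 1,
          α (σ i) - α (τ i) - 1, α (τ i) - α (σ i) - 1, -(α (σ i) + α (τ i)) - 1,
          α (σ i) + α (τ i) + 1,
          α (σ i) - α (τ i) + 1, α (τ i) - α (σ i) + 1, -(α (σ i) + α (τ i)) + 1] s)]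
    refine Finset.prod_congr rfl fun i _ => ?_
    simp only [Fin.sum_univ_eight, hC]
    have hG' : ∀ d, G (d - 1) = (-2 : ℝ) • B d + G (d + 1) := fun d => by rw [← hG]; ring
    have hB1 : B (α (τ i) - α (σ i)) = B (α (σ i) - α (τ i)) := by rw [← hB]; congr 1; ring
    have hB2 : B (-α (τ i) + -α (σ i)) = B (α (σ i) + α (τ i)) := by rw [← hB]; congr 1; ring
    simp [hG', hB1, hB2, hε, smul_add, smul_smul, mul_assoc]
    module
  rw [hdet, sq, Finset.sum_mul_sum, Finset.mul_sum, map_sum]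
  have : ∀ σ : Equiv.Perm (Fin k), tensorFunctional G ((∏ i, (Laur.pw i (-1) - Laur.pw i 1)) *
      ∑ τ : Equiv.Perm (Fin k), ((Equiv.Perm.sign σ : ℤ) : Laur k) * (∏ i, p i (σ i)) *
        (((Equiv.Perm.sign τ : ℤ) : Laur k) * ∏ i, p i (τ i))) = ∑ τ : Equiv.Perm (Fin k),
      ((Equiv.Perm.sign σ : ℤ) : ℝ⟦X⟧) * (((Equiv.Perm.sign τ : ℤ) : ℝ⟦X⟧) *
        ∏ i, C (σ i) (τ i)) := by
    intro σ
    rw [Finset.mul_sum, map_sum]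
    refine Finset.sum_congr rfl fun τ _ => ?_
    have hz : ∀ (a b : ℤ) (f : Laur k), (a : ℝ⟦X⟧) * ((b : ℝ⟦X⟧) * tensorFunctional G f) =
        tensorFunctional G ((a : Laur k) * ((b : Laur k) * f)) := by
      intro a b f
      simp only [← zsmul_eq_mul, map_zsmul]
    rw [← hterm, Finset.prod_mul_distrib, Finset.prod_mul_distrib, hz]
    congr 1
    ring
  rw [Finset.sum_congr rfl fun σ _ => this σ, sum_perm_sum_perm_eq_factorial_smul_det]
  have h2 : Matrix.of C = (-4 * ε) •
      Matrix.of fun i j : Fin k => B (α i - α j) + ε • B (α i + α j) := by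
    ext1 i j; rfl
  rw [h2, Matrix.det_smul_of_tower, Fintype.card_fin, mul_smul, Algebra.smul_def (k.factorial : ℝ),
    map_natCast]

lemma isMonicOfDegree_of_recurrence {R : Type*} [CommRing R] [Nontrivial R] (a : ℕ)
    (P : ℕ → Polynomial R)
    (h0 : (P 0).IsMonicOfDegree a) (h1 : (P 1).IsMonicOfDegree (a + 1))
    (h : ∀ n, P (n + 2) = Polynomial.X * P (n + 1) - P n) (n : ℕ) :
    (P n).IsMonicOfDegree (n + a) := by
  induction n using Nat.twoStepInduction with
  | zero => simpa using h0
  | one => simpa [add_comm] using h1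
  | more n ih ih' =>
    rw [h]
    have := (Polynomial.isMonicOfDegree_X R).mul ih'
    rw [show 1 + (n + 1 + a) = n + 2 + a by ring] at this
    exact this.sub (by rw [ih.natDegree_eq]; omega)

lemma isMonicOfDegree_chebyshev_S {R : Type*} [CommRing R] [Nontrivial R] (n : ℕ) :
    (Polynomial.Chebyshev.S R n).IsMonicOfDegree n := by
  refine isMonicOfDegree_of_recurrence 0 (fun n => Polynomial.Chebyshev.S R n) ?_ ?_ ?_ n
  · simp
  · simpa using Polynomial.isMonicOfDegree_X R
  · intro n; push_cast; exact Polynomial.Chebyshev.S_add_two R n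

lemma isMonicOfDegree_chebyshev_C {R : Type*} [CommRing R] [Nontrivial R] (n : ℕ) :
    (Polynomial.Chebyshev.C R (n + 1)).IsMonicOfDegree (n + 1) := by
  refine isMonicOfDegree_of_recurrence 1 (fun n => Polynomial.Chebyshev.C R (n + 1)) ?_ ?_ ?_ n
  · simpa using Polynomial.isMonicOfDegree_X R
  · have : (Polynomial.X ^ 2 - 2 : Polynomial R).IsMonicOfDegree 2 :=
      (Polynomial.isMonicOfDegree_X_pow R 2).sub (by
        rw [Polynomial.natDegree_ofNat]; norm_num)
    simpa [show (1 + 1 : ℤ) = 2 by norm_num, Polynomial.Chebyshev.C_two] using this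
  · intro n; push_cast
    rw [show (n : ℤ) + 2 + 1 = (n + 1 : ℤ) + 2 by ring, Polynomial.Chebyshev.C_add_two]

lemma eval_chebyshev_C {R : Type*} [CommRing R] (x x' : R) (h : x * x' = 1) (n : ℕ) :
    (Polynomial.Chebyshev.C R n).eval (x + x') = x ^ n + x' ^ n := by
  induction n using Nat.twoStepInduction with
  | zero => simp; norm_num
  | one => simp
  | more n ih ih' =>
    push_cast at ih' ⊢
    rw [Polynomial.Chebyshev.C_add_two, Polynomial.eval_sub, Polynomial.eval_mul,
      Polynomial.eval_X, ih, ih']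
    linear_combination (x ^ n + x' ^ n) * h

lemma mul_eval_chebyshev_S {R : Type*} [CommRing R] (x x' : R) (h : x * x' = 1) (n : ℕ) :
    (x - x') * (Polynomial.Chebyshev.S R n).eval (x + x') = x ^ (n + 1) - x' ^ (n + 1) := by
  induction n using Nat.twoStepInduction with
  | zero => simp
  | one => simp; ring
  | more n ih ih' =>
    push_cast at ih' ⊢
    rw [Polynomial.Chebyshev.S_add_two, Polynomial.eval_sub, Polynomial.eval_mul,
      Polynomial.eval_X, mul_sub, ih, mul_left_comm, ih']
    linear_combination (x ^ (n + 1) - x' ^ (n + 1)) * h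

lemma det_pow_add_pow {R : Type*} [CommRing R] [Nontrivial R] {k : ℕ} (x x' : Fin k → R)
    (h : ∀ i, x i * x' i = 1) :
    (Matrix.of fun i j : Fin k => x i ^ (j : ℕ) + x' i ^ (j : ℕ)).det =
      (∏ j : Fin k, if (j : ℕ) = 0 then 2 else 1) *
        (Matrix.vandermonde fun i => x i + x' i).det := by
  rw [Matrix.det_eval_matrixOfPolynomials_eq_det_vandermonde _
    (fun j : Fin k => if (j : ℕ) = 0 then 1 else Polynomial.Chebyshev.C R (j : ℕ)),
    ← Matrix.det_mul_row]
  · congr 1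
    ext1 i j
    simp only [Matrix.of_apply]
    split_ifs with hj
    · simp [hj]; norm_num
    · rw [eval_chebyshev_C _ _ (h i), one_mul]
  · intro j
    split_ifs with hj
    · simp [hj]
    · obtain ⟨n, hn⟩ := Nat.exists_eq_succ_of_ne_zero hj
      have := isMonicOfDegree_chebyshev_C (R := R) n
      rw [hn]; push_cast; exact this.natDegree_eq
  · intro j
    split_ifs with hj
    · exact Polynomial.monic_one
    · obtain ⟨n, hn⟩ := Nat.exists_eq_succ_of_ne_zero hj
      have := isMonicOfDegree_chebyshev_C (R := R) n
      rw [hn]; push_cast; exact this.monic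

lemma det_pow_sub_pow {R : Type*} [CommRing R] [Nontrivial R] {k : ℕ} (x x' : Fin k → R)
    (h : ∀ i, x i * x' i = 1) :
    (Matrix.of fun i j : Fin k => x i ^ ((j : ℕ) + 1) - x' i ^ ((j : ℕ) + 1)).det =
      (∏ i, (x i - x' i)) * (Matrix.vandermonde fun i => x i + x' i).det := by
  rw [Matrix.det_eval_matrixOfPolynomials_eq_det_vandermonde _
    (fun j : Fin k => Polynomial.Chebyshev.S R (j : ℕ))
    (fun j => (isMonicOfDegree_chebyshev_S (R := R) j).natDegree_eq)
    (fun j => (isMonicOfDegree_chebyshev_S (R := R) j).monic),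
    ← Matrix.det_mul_column]
  congr 1
  ext1 i j
  simp only [Matrix.of_apply]
  rw [mul_eval_chebyshev_S _ _ (h i)]

/-- The linear functional on Laurent polynomials attached to the sign of odd integers. -/
abbrev oddSignFunctional (k : ℕ) : Laur k →ₗ[ℝ] ℝ⟦X⟧ := tensorFunctional (heatSeries oddSign)

/-- The `2k` values `x_i, x_i⁻¹`. -/
def evenPoint (k : ℕ) : Fin (k + k) → Laur k :=
  Fin.append (fun i => Laur.pw i 1) (fun i => Laur.pw i (-1))

/-- The `2k + 2` values `x_i, x_i⁻¹, 1, -1`. -/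
def oddPoint (k : ℕ) : Fin (k + k + 2) → Laur k :=
  Fin.append (evenPoint k) ![1, -1]

lemma Laur.pw_one_mul_pw_neg_one {k : ℕ} (i : Fin k) : pw i 1 * pw i (-1) = 1 := by
  rw [Laur.pw_mul]; exact Laur.pw_zero i

lemma exists_oddSignFunctional_alternant_evenPoint (k : ℕ) : ∃ K : ℝ, K ≠ 0 ∧
    oddSignFunctional k (alternant (evenPoint k) 0) =
      K • (Matrix.of fun i j : Fin k => besselSeries ((i : ℕ) - (j : ℕ) : ℤ) +
        besselSeries ((i : ℕ) + (j : ℕ) : ℤ)).det := by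
  obtain ⟨s, hs, hs'⟩ := det_vandermonde_append_inv (fun i : Fin k => Laur.pw i 1)
    (fun i => Laur.pw i (-1)) Laur.pw_one_mul_pw_neg_one
  set c : ℝ := ∏ j : Fin k, if (j : ℕ) = 0 then 2 else 1 with hc
  have hc0 : c ≠ 0 := by
    rw [hc, Finset.prod_ne_zero_iff]; intro j _; split_ifs <;> norm_num
  have hd := det_pow_add_pow (fun i : Fin k => Laur.pw i 1)
    (fun i => Laur.pw i (-1)) Laur.pw_one_mul_pw_neg_one
  have hcm : (∏ j : Fin k, if (j : ℕ) = 0 then 2 else 1 : Laur k) = algebraMap ℝ _ c := by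
    rw [hc, map_prod]; refine Finset.prod_congr rfl fun j _ => ?_
    split_ifs
    · rw [map_ofNat]
    · rw [map_one]
  have hm := tensorFunctional_prod_mul_det_sq (heatSeries oddSign) besselSeries
    heatSeries_oddSign_sub besselSeries_neg 1 (by norm_num) (fun i : Fin k => ((i : ℕ) : ℤ))
  simp only [Laur.pw_pow] at hd
  rw [hcm] at hd
  simp only [one_smul, mul_one, mul_neg] at hm hd
  rw [hd, mul_pow, ← map_pow, mul_left_comm, ← Algebra.smul_def, map_smul] at hm
  refine ⟨s * ((c ^ 2)⁻¹ * (k.factorial * (-4) ^ k)), by positivity, ?_⟩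
  rw [alternant_zero, evenPoint, hs', map_smul, mul_smul, mul_smul, ← hm, inv_smul_smul₀]
  positivity

lemma exists_oddSignFunctional_alternant_oddPoint (k : ℕ) : ∃ K : ℝ, K ≠ 0 ∧
    oddSignFunctional k (alternant (oddPoint k) 0) =
      K • (Matrix.of fun i j : Fin k => besselSeries ((i : ℕ) - (j : ℕ) : ℤ) -
        besselSeries ((i : ℕ) + (j : ℕ) + 2 : ℤ)).det := by
  obtain ⟨s, hs, hs'⟩ := det_vandermonde_append_inv_one_neg_one (fun i : Fin k => Laur.pw i 1)
    (fun i => Laur.pw i (-1)) Laur.pw_one_mul_pw_neg_one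
  have hd := det_pow_sub_pow (fun i : Fin k => Laur.pw i 1)
    (fun i => Laur.pw i (-1)) Laur.pw_one_mul_pw_neg_one
  have hm := tensorFunctional_prod_mul_det_sq (heatSeries oddSign) besselSeries
    heatSeries_oddSign_sub besselSeries_neg (-1) (by norm_num)
    (fun i : Fin k => ((i : ℕ) : ℤ) + 1)
  simp only [Laur.pw_pow] at hd
  push_cast at hd
  simp only [neg_smul, one_smul, mul_one, mul_neg, ← sub_eq_add_neg, neg_neg] at hm hd
  rw [hd] at hm
  refine ⟨s * (k.factorial * 4 ^ k), by positivity, ?_⟩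
  rw [alternant_zero, oddPoint, evenPoint, hs', map_smul, mul_smul, hm]
  congr 3
  ext1 i j
  simp only [Matrix.of_apply]
  congr 2 <;> ring

lemma oddSign_congr {d e : ℤ} (h : d % 2 = e % 2) (hs : d % 2 = 1 → (0 < d ↔ 0 < e)) :
    oddSign d = oddSign e := by
  unfold oddSign
  simp only [Int.odd_iff, ← h]
  split_ifs with h1
  · have := hs h1
    rcases lt_or_ge 0 d with h2 | h2
    · rw [Int.sign_eq_one_of_pos h2, Int.sign_eq_one_of_pos (this.1 h2)]
    · rw [Int.sign_eq_neg_one_of_neg (by omega), Int.sign_eq_neg_one_of_neg (by omega)]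
  · rfl

/-- The signed weight of `b`: signs of differences along the pairs `(u i, v i)`, and
parities on `W`. -/
def signWeight {k m : ℕ} (u v : Fin k → Fin m) (W : Finset (Fin m)) (b : Fin m → ℕ) : ℝ :=
  (∏ i, oddSign ((b (u i) : ℤ) - b (v i))) * ∏ w ∈ W, (-1) ^ b w

/-- The alternating sum of `signWeight` over all rearrangements of `x_r + r`. -/
def signSum {k m : ℕ} (u v : Fin k → Fin m) (W : Finset (Fin m)) (x : Fin m → ℕ) : ℝ :=
  ∑ σ : Equiv.Perm (Fin m), ((Equiv.Perm.sign σ : ℤ) : ℝ) *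
    signWeight u v W fun r => x (σ r) + σ r

lemma signWeight_congr {k m : ℕ} (u v : Fin k → Fin m) (W : Finset (Fin m)) {b b' : Fin m → ℕ}
    (h : ∀ r s, oddSign ((b r : ℤ) - b s) = oddSign ((b' r : ℤ) - b' s))
    (h' : ∀ r, b r % 2 = b' r % 2) : signWeight u v W b = signWeight u v W b' := by
  unfold signWeight
  congr 1
  · exact Finset.prod_congr rfl fun i _ => h _ _
  · refine Finset.prod_congr rfl fun w _ => ?_
    rw [neg_one_pow_eq_pow_mod_two, h' w, ← neg_one_pow_eq_pow_mod_two]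

lemma signSum_eq_zero {k m : ℕ} (u v : Fin k → Fin m) (W : Finset (Fin m)) {x : Fin m → ℕ}
    (hx : Monotone x) (h : ¬ ∀ i j, x i % 2 = x j % 2) : signSum u v W x = 0 := by
  obtain ⟨p, q, hpq, hpar⟩ : ∃ p q : Fin m, (q : ℕ) = p + 1 ∧ x p % 2 ≠ x q % 2 := by
    by_contra! hc
    apply h
    have : ∀ n (hn : n < m), x ⟨n, hn⟩ % 2 = x ⟨0, by omega⟩ % 2 := by
      intro n
      induction n with
      | zero => intro _; rfl
      | succ n ih =>
        intro hn
        rw [← ih (by omega), hc ⟨n, by omega⟩ ⟨n + 1, hn⟩ rfl]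
    intro i j
    rw [this i i.2, this j j.2]
  have hlt : p < q := by rw [Fin.lt_def]; omega
  set a : Fin m → ℕ := fun r => x r + r with ha
  have hmono : ∀ r s : Fin m, (r : ℕ) < s → a r < a s := by
    intro r s hrs
    have := hx (show r ≤ s by rw [Fin.le_def]; omega)
    simp only [ha]; omega
  have hapq : a p % 2 = a q % 2 := by simp only [ha]; omega
  have hpar' : ∀ r, a (Equiv.swap p q r) % 2 = a r % 2 := by
    intro r
    rw [Equiv.swap_apply_def]
    split_ifs with h1 h2
    · rw [h1]; exact hapq.symm
    · rw [h2]; exact hapq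
    · rfl
  have hpq' := hmono p q hlt
  have hcases : ∀ r, r ≠ p → r ≠ q → a r < a p ∧ a r < a q ∨ a p < a r ∧ a q < a r := by
    intro r h1 h2
    have h1' : (r : ℕ) ≠ p := fun h => h1 (Fin.ext h)
    have h2' : (r : ℕ) ≠ q := fun h => h2 (Fin.ext h)
    rcases lt_or_ge (r : ℕ) p with h3 | h3
    · exact Or.inl ⟨hmono r p h3, hmono r q (by omega)⟩
    · exact Or.inr ⟨hmono p r (by omega), hmono q r (by omega)⟩
  have hsw : ∀ r s, oddSign ((a (Equiv.swap p q r) : ℤ) - a (Equiv.swap p q s)) =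
      oddSign ((a r : ℤ) - a s) := by
    intro r s
    have h1 := hpar' r
    have h2 := hpar' s
    apply oddSign_congr
    · omega
    intro hodd
    rw [Equiv.swap_apply_def, Equiv.swap_apply_def] at *
    split_ifs at * with h1 h2 h3 h4 h5 h6 h7
    all_goals subst_vars
    all_goals first
      | (have := hcases r ‹_› ‹_›; omega)
      | (have := hcases s ‹_› ‹_›; omega)
      | omega
  have hneg : signSum u v W x = -signSum u v W x := by
    conv_lhs => rw [signSum]
    rw [signSum, ← Finset.sum_neg_distrib]
    refine Fintype.sum_equiv (Equiv.mulLeft (Equiv.swap p q)) _ _ fun σ => ?_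
    rw [Equiv.coe_mulLeft, Equiv.Perm.sign_mul, Equiv.Perm.sign_swap hlt.ne]
    push_cast
    rw [neg_one_mul, neg_mul, neg_neg]
    congr 1
    exact signWeight_congr u v W (fun r s => (hsw (σ r) (σ s)).symm) (fun r => (hpar' (σ r)).symm)
  linarith

lemma signSum_of_even {k m : ℕ} (u v : Fin k → Fin m) (W : Finset (Fin m)) {x : Fin m → ℕ}
    (hx : Monotone x) (h : ∀ i, Even (x i)) : signSum u v W x = signSum u v W 0 := by
  unfold signSum
  refine Finset.sum_congr rfl fun σ _ => ?_
  congr 1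
  refine signWeight_congr u v W (fun r s => ?_) (fun r => ?_)
  · have h1 := Nat.even_iff.1 (h (σ r))
    have h2 := Nat.even_iff.1 (h (σ s))
    apply oddSign_congr
    · simp only [Pi.zero_apply]; omega
    · intro hodd
      simp only [Pi.zero_apply]
      rcases lt_trichotomy (σ r) (σ s) with h3 | h3 | h3
      · have := hx h3.le
        rw [Fin.lt_def] at h3
        omega
      · rw [h3] at hodd; omega
      · have := hx h3.le
        rw [Fin.lt_def] at h3
        omega
  · have h1 := Nat.even_iff.1 (h (σ r))
    simp only [Pi.zero_apply]; omega

lemma signSum_succ {k m : ℕ} (u v : Fin k → Fin m) (W : Finset (Fin m)) (x : Fin m → ℕ) :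
    signSum u v W (x + 1) = (-1) ^ W.card * signSum u v W x := by
  unfold signSum
  rw [Finset.mul_sum]
  refine Finset.sum_congr rfl fun σ _ => ?_
  rw [mul_left_comm]
  congr 1
  unfold signWeight
  rw [mul_left_comm, ← Finset.prod_const, ← Finset.prod_mul_distrib]
  congr 1
  · refine Finset.prod_congr rfl fun i _ => ?_
    congr 1
    simp only [Pi.add_apply, Pi.one_apply]
    push_cast; ring
  · refine Finset.prod_congr rfl fun w _ => ?_
    simp only [Pi.add_apply, Pi.one_apply]
    ring

lemma signSum_of_odd {k m : ℕ} (u v : Fin k → Fin m) (W : Finset (Fin m)) {x : Fin m → ℕ}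
    (hx : Monotone x) (h : ∀ i, Odd (x i)) :
    signSum u v W x = (-1) ^ W.card * signSum u v W 0 := by
  have h1 : x = (x - 1) + 1 := by
    ext i
    have := (h i).pos
    simp only [Pi.add_apply, Pi.sub_apply, Pi.one_apply]; omega
  rw [h1, signSum_succ, signSum_of_even]
  · intro i j hij
    have := hx hij
    simp only [Pi.sub_apply, Pi.one_apply]; omega
  · intro i
    have := Nat.odd_iff.1 (h i)
    rw [Nat.even_iff]
    simp only [Pi.sub_apply, Pi.one_apply]; omega

lemma constantCoeff_oddSignFunctional_prod_pw {k : ℕ} (d : Fin k → ℤ) :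
    constantCoeff (oddSignFunctional k (∏ i, Laur.pw i (d i))) = ∏ i, oddSign (d i) := by
  have := Laur.prod_pw d fun _ => 1
  unfold Laur.pw
  rw [this, oddSignFunctional, tensorFunctional_single, Finset.prod_const_one, one_smul, map_prod]
  simp only [constantCoeff_heatSeries]

lemma constantCoeff_functional_alternant {k m : ℕ} (z : Fin m → Laur k) (u v : Fin k → Fin m)
    (W : Finset (Fin m))
    (h : ∀ b : Fin m → ℕ, ∏ r, z r ^ b r = (∏ w ∈ W, (-1 : ℝ) ^ b w) •
      ∏ i, Laur.pw i ((b (u i) : ℤ) - b (v i))) (x : Fin m → ℕ) :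
    constantCoeff (oddSignFunctional k (alternant z x)) = signSum u v W x := by
  rw [alternant_apply, map_sum, map_sum, signSum]
  refine Fintype.sum_equiv (Equiv.inv _) _ _ fun σ => ?_
  rw [Equiv.inv_apply, Equiv.Perm.sign_inv, ← Equiv.prod_comp σ⁻¹]
  have hinv : ∀ r, σ (σ⁻¹ r) = r := fun r => by simp
  simp only [hinv]
  rw [h (fun r => x (σ⁻¹ r) + (σ⁻¹ r : Fin m)), ← zsmul_eq_mul, map_zsmul, map_zsmul, map_smul,
    ← coeff_zero_eq_constantCoeff_apply, map_smul, coeff_zero_eq_constantCoeff_apply,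
    constantCoeff_oddSignFunctional_prod_pw, zsmul_eq_mul, smul_eq_mul, signWeight, mul_comm (∏ w ∈ W, _)]

lemma evenPoint_prod_pow {k : ℕ} (b : Fin (k + k) → ℕ) :
    ∏ r, evenPoint k r ^ b r =
      ∏ i, Laur.pw i ((b (Fin.castAdd k i) : ℤ) - b (Fin.natAdd k i)) := by
  rw [Fin.prod_univ_add, ← Finset.prod_mul_distrib]
  refine Finset.prod_congr rfl fun i _ => ?_
  rw [evenPoint, Fin.append_left, Fin.append_right, Laur.pw_pow, Laur.pw_pow, Laur.pw_mul]
  congr 1; ring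

lemma constantCoeff_functional_alternant_evenPoint {k : ℕ} (x : Fin (k + k) → ℕ) :
    constantCoeff (oddSignFunctional k (alternant (evenPoint k) x)) =
      signSum (Fin.castAdd k) (Fin.natAdd k) ∅ x :=
  constantCoeff_functional_alternant _ _ _ _ (fun b => by
    rw [evenPoint_prod_pow, Finset.prod_empty, one_smul]) x

lemma constantCoeff_functional_alternant_oddPoint {k : ℕ} (x : Fin (k + k + 2) → ℕ) :
    constantCoeff (oddSignFunctional k (alternant (oddPoint k) x)) =
      signSum (fun i => Fin.castAdd 2 (Fin.castAdd k i)) (fun i => Fin.castAdd 2 (Fin.natAdd k i))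
        {Fin.natAdd (k + k) 1} x :=
  constantCoeff_functional_alternant _ _ _ _ (fun b => by
    rw [Fin.prod_univ_add, Fin.prod_univ_two, Finset.prod_singleton]
    simp only [oddPoint, Fin.append_left, Fin.append_right]
    rw [evenPoint_prod_pow (fun i => b (Fin.castAdd 2 i))]
    simp only [Matrix.cons_val_zero, Matrix.cons_val_one, one_pow, one_mul]
    rw [Algebra.smul_def, map_pow, map_neg, map_one, mul_comm]) x

lemma walkSum_congr {m : ℕ} {E E' : (Fin m → ℕ) → ℝ} (h : ∀ x, Monotone x → E x = E' x) (n : ℕ)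
    (x : Fin m → ℕ) (hx : Monotone x) : walkSum E n x = walkSum E' n x := by
  induction n generalizing x with
  | zero => exact h x hx
  | succ n ih =>
    unfold walkSum
    refine Finset.sum_congr rfl fun j _ => ?_
    split_ifs with hj
    · exact ih _ hj
    · rfl

lemma walkSum_mul_add_mul {m : ℕ} (E E' : (Fin m → ℕ) → ℝ) (c d : ℝ) (n : ℕ) (x : Fin m → ℕ) :
    walkSum (fun x => c * E x + d * E' x) n x = c * walkSum E n x + d * walkSum E' n x := by
  induction n generalizing x with
  | zero => rfl
  | succ n ih =>
    simp only [walkSum]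
    rw [Finset.mul_sum, Finset.mul_sum, ← Finset.sum_add_distrib]
    refine Finset.sum_congr rfl fun j _ => ?_
    split_ifs with hj
    · exact ih _
    · simp

open Classical in
/-- The number of `n`-step walks in the monotone cone of `ℕ^m` from `0` to an all-even point. -/
def evenWalk (m n : ℕ) : ℝ :=
  walkSum (fun x : Fin m → ℕ => if ∀ i, Even (x i) then 1 else 0) n 0

open Classical in
/-- The number of `n`-step walks in the monotone cone of `ℕ^m` from `0` to an all-odd point. -/
def oddWalk (m n : ℕ) : ℝ :=
  walkSum (fun x : Fin m → ℕ => if ∀ i, Odd (x i) then 1 else 0) n 0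

lemma evenWalk_zero (m : ℕ) : evenWalk m 0 = 1 := by simp [evenWalk, walkSum]

lemma oddWalk_zero {m : ℕ} (hm : 0 < m) : oddWalk m 0 = 0 := by
  have : Nonempty (Fin m) := ⟨⟨0, hm⟩⟩
  simp [oddWalk, walkSum]

lemma evenWalk_of_odd (m : ℕ) {n : ℕ} (hn : Odd n) : evenWalk m n = 0 := by
  classical
  have : ∀ (n : ℕ) (x : Fin m → ℕ), Odd (∑ i, x i + n) →
      walkSum (fun x : Fin m → ℕ => if ∀ i, Even (x i) then 1 else 0) n x = 0 := by
    intro n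
    induction n with
    | zero =>
      intro x hx
      rw [walkSum, if_neg]
      intro h
      rw [add_zero, ← Nat.not_even_iff_odd] at hx
      exact hx (Finset.even_sum _ fun i _ => h i)
    | succ n ih =>
      intro x hx
      rw [walkSum]
      refine Finset.sum_eq_zero fun j _ => ?_
      split_ifs
      · apply ih
        simp only [Pi.add_apply, Finset.sum_add_distrib, Finset.sum_pi_single', Finset.mem_univ,
          if_true]
        rwa [add_assoc, add_comm 1 n]
      · rfl
  exact this n 0 (by simpa using hn)

lemma walkSum_signSum {k m : ℕ} (hm : 0 < m) (u v : Fin k → Fin m) (W : Finset (Fin m)) (n : ℕ) :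
    walkSum (signSum u v W) n 0 =
      signSum u v W 0 * (evenWalk m n + (-1) ^ W.card * oddWalk m n) := by
  classical
  rw [walkSum_congr (E' := fun x => signSum u v W 0 * (if ∀ i, Even (x i) then 1 else 0) +
    (-1) ^ W.card * signSum u v W 0 * (if ∀ i, Odd (x i) then 1 else 0)) _ n 0 monotone_const,
    walkSum_mul_add_mul, evenWalk, oddWalk]
  · ring
  intro x hx
  have i0 : Fin m := ⟨0, hm⟩
  by_cases he : ∀ i, Even (x i)
  · rw [if_pos he, if_neg (fun h => Nat.not_even_iff_odd.2 (h i0) (he i0)), signSum_of_even _ _ _ hx he]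
    ring
  by_cases ho : ∀ i, Odd (x i)
  · rw [if_neg he, if_pos ho, signSum_of_odd _ _ _ hx ho]
    ring
  rw [if_neg he, if_neg ho, signSum_eq_zero _ _ _ hx]
  · ring
  intro h
  rcases Nat.even_or_odd (x i0) with h0 | h0
  · exact he fun i => by rw [Nat.even_iff] at *; rw [h i i0, h0]
  · exact ho fun i => by rw [Nat.odd_iff] at *; rw [h i i0, h0]

lemma factorial_mul_coeff_of_alternant {k m : ℕ} (hm : 0 < m) (z : Fin m → Laur k)
    (hz : ∑ i, z i = ∑ i, (Laur.pw i 1 + Laur.pw i (-1)))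
    (u v : Fin k → Fin m) (W : Finset (Fin m))
    (h : ∀ x, constantCoeff (oddSignFunctional k (alternant z x)) = signSum u v W x)
    {P : ℝ⟦X⟧} (hP : ∃ K : ℝ, K ≠ 0 ∧ oddSignFunctional k (alternant z 0) = K • P) (n : ℕ) :
    n.factorial * coeff n P =
      constantCoeff P * (evenWalk m n + (-1) ^ W.card * oddWalk m n) := by
  obtain ⟨K, hK, hP⟩ := hP
  have hw : ∀ n, n.factorial * (K * coeff n P) =
      signSum u v W 0 * (evenWalk m n + (-1) ^ W.card * oddWalk m n) := by
    intro n
    have hc := coeff_alternant z (oddSignFunctional k) (fun f => by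
      rw [hz]; exact tensorFunctional_derivative _ (heatSeries_derivative _) f) n 0 monotone_const
    rw [hP, map_smul, smul_eq_mul] at hc
    rw [← hc, ← walkSum_signSum hm]
    congr 1
    funext x
    exact h x
  have h0 := hw 0
  rw [evenWalk_zero, oddWalk_zero hm, coeff_zero_eq_constantCoeff_apply] at h0
  simp only [Nat.factorial_zero, Nat.cast_one, one_mul, mul_zero, add_zero, mul_one] at h0
  have hn := hw n
  rw [← h0, mul_left_comm, mul_assoc] at hn
  exact mul_left_cancel₀ hK hn

/-- The generating function `det (I_{j-k} + I_{j+k})`. -/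
def besselDetEven (k : ℕ) : ℝ⟦X⟧ :=
  (Matrix.of fun i j : Fin k => besselSeries ((i : ℕ) - (j : ℕ) : ℤ) +
    besselSeries ((i : ℕ) + (j : ℕ) : ℤ)).det

/-- The generating function `det (I_{j-k} - I_{j+k+2})`. -/
def besselDetOdd (k : ℕ) : ℝ⟦X⟧ :=
  (Matrix.of fun i j : Fin k => besselSeries ((i : ℕ) - (j : ℕ) : ℤ) -
    besselSeries ((i : ℕ) + (j : ℕ) + 2 : ℤ)).det

lemma constantCoeff_besselSeries (d : ℤ) :
    constantCoeff (besselSeries d) = if d = 0 then 1 else 0 :=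
  constantCoeff_heatSeries _ d

lemma constantCoeff_besselDetEven (k : ℕ) : constantCoeff (besselDetEven (k + 1)) = 2 := by
  rw [besselDetEven, RingHom.map_det]
  have : (RingHom.mapMatrix (constantCoeff (R := ℝ))) (Matrix.of fun i j : Fin (k + 1) =>
      besselSeries ((i : ℕ) - (j : ℕ) : ℤ) + besselSeries ((i : ℕ) + (j : ℕ) : ℤ)) =
      Matrix.diagonal fun i : Fin (k + 1) => if i = 0 then 2 else 1 := by
    ext i j
    simp only [RingHom.mapMatrix_apply, Matrix.map_apply, Matrix.of_apply, map_add,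
      constantCoeff_besselSeries, Matrix.diagonal_apply, Fin.ext_iff, Fin.val_zero]
    split_ifs <;> first | omega | norm_num
  rw [this, Matrix.det_diagonal, Fin.prod_univ_succ]
  simp [Fin.succ_ne_zero]

lemma constantCoeff_besselDetOdd (k : ℕ) : constantCoeff (besselDetOdd k) = 1 := by
  rw [besselDetOdd, RingHom.map_det]
  have : (RingHom.mapMatrix (constantCoeff (R := ℝ))) (Matrix.of fun i j : Fin k =>
      besselSeries ((i : ℕ) - (j : ℕ) : ℤ) - besselSeries ((i : ℕ) + (j : ℕ) + 2 : ℤ)) = 1 := by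
    ext i j
    simp only [RingHom.mapMatrix_apply, Matrix.map_apply, Matrix.of_apply, map_sub,
      constantCoeff_besselSeries, Matrix.one_apply, Fin.ext_iff]
    split_ifs <;> first | omega | norm_num
  rw [this, Matrix.det_one]

lemma sum_evenPoint (k : ℕ) :
    ∑ i, evenPoint k i = ∑ i, (Laur.pw i 1 + Laur.pw i (-1)) := by
  rw [Fin.sum_univ_add, Finset.sum_add_distrib]
  simp only [evenPoint, Fin.append_left, Fin.append_right]

lemma sum_oddPoint (k : ℕ) :
    ∑ i, oddPoint k i = ∑ i, (Laur.pw i 1 + Laur.pw i (-1)) := by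
  rw [Fin.sum_univ_add, ← sum_evenPoint, Fin.sum_univ_two]
  simp only [oddPoint, Fin.append_left, Fin.append_right]
  simp

lemma factorial_mul_coeff_besselDetEven (k n : ℕ) :
    n.factorial * coeff n (besselDetEven (k + 1)) =
      2 * (evenWalk (2 * (k + 1)) n + oddWalk (2 * (k + 1)) n) := by
  have h := factorial_mul_coeff_of_alternant (by omega) (evenPoint (k + 1)) (sum_evenPoint _) _ _ _
    constantCoeff_functional_alternant_evenPoint
    (exists_oddSignFunctional_alternant_evenPoint (k + 1)) n
  rw [← two_mul] at h
  have h2 := constantCoeff_besselDetEven k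
  rw [besselDetEven] at h2 ⊢
  rw [h, h2]
  simp

lemma factorial_mul_coeff_besselDetOdd (k n : ℕ) :
    n.factorial * coeff n (besselDetOdd k) =
      evenWalk (2 * (k + 1)) n - oddWalk (2 * (k + 1)) n := by
  have h := factorial_mul_coeff_of_alternant (by omega) (oddPoint k) (sum_oddPoint k) _ _ _
    constantCoeff_functional_alternant_oddPoint
    (exists_oddSignFunctional_alternant_oddPoint k) n
  rw [card_singleton, show k + k + 2 = 2 * (k + 1) by ring] at h
  have h2 := constantCoeff_besselDetOdd k
  rw [besselDetOdd] at h2 ⊢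
  rw [h, h2]
  simp [sub_eq_add_neg]

theorem tsum_evenWalk (l : ℕ) (hl : 0 < l) (t : ℝ) :
    ∑' n : ℕ, evenWalk (2 * l) (2 * n) * t ^ (2 * n) / (Nat.factorial (2 * n) : ℝ) =
      (1 / 2) *
        ((1 / 2) * Matrix.det (Matrix.of fun j k : Fin l =>
            besselI ((j : ℕ) - (k : ℕ) : ℤ) t + besselI ((j : ℕ) + (k : ℕ) : ℤ) t) +
          Matrix.det (Matrix.of fun j k : Fin (l - 1) =>
            besselI ((j : ℕ) - (k : ℕ) : ℤ) t -
              besselI ((j : ℕ) + (k : ℕ) + 2 : ℤ) t)) := by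
  obtain ⟨k, rfl⟩ := Nat.exists_eq_succ_of_ne_zero hl.ne'
  rw [Nat.succ_eq_add_one, Nat.add_sub_cancel]
  have h1 : AbsConvAt t (besselDetEven (k + 1)) _ := AbsConvAt.det
    (V := Matrix.of fun i j : Fin (k + 1) => besselI ((i : ℕ) - (j : ℕ) : ℤ) t +
      besselI ((i : ℕ) + (j : ℕ) : ℤ) t)
    fun i j => (absConvAt_besselSeries t _).add (absConvAt_besselSeries t _)
  have h2 : AbsConvAt t (besselDetOdd k) _ := AbsConvAt.det
    (V := Matrix.of fun i j : Fin k => besselI ((i : ℕ) - (j : ℕ) : ℤ) t -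
      besselI ((i : ℕ) + (j : ℕ) + 2 : ℤ) t)
    fun i j => by
      simpa [← sub_eq_add_neg] using
        (absConvAt_besselSeries t ((i : ℕ) - (j : ℕ) : ℤ)).add
        ((absConvAt_besselSeries t ((i : ℕ) + (j : ℕ) + 2 : ℤ)).smul (-1))
  have h3 := (((h1.smul (1 / 2)).add h2).smul (1 / 2)).2
  have hcoeff : ∀ n, coeff n ((1 / 2 : ℝ) • ((1 / 2 : ℝ) • besselDetEven (k + 1) + besselDetOdd k)) =
      evenWalk (2 * (k + 1)) n / n.factorial := by
    intro n
    have e1 := factorial_mul_coeff_besselDetEven k n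
    have e2 := factorial_mul_coeff_besselDetOdd k n
    rw [eq_div_iff (by positivity)]
    simp only [map_smul, map_add, smul_eq_mul]
    linear_combination (1 / 4) * e1 + (1 / 2) * e2
  have hinj : Function.Injective fun n : ℕ => 2 * n := fun a b h => by simpa using h
  rw [← hinj.hasSum_iff] at h3
  · rw [← h3.tsum_eq]
    refine tsum_congr fun n => ?_
    rw [Function.comp_apply, hcoeff]
    ring
  · intro n hn
    rw [hcoeff, evenWalk_of_odd, zero_div, zero_mul]
    rw [← Nat.not_even_iff_odd]
    rintro ⟨a, rfl⟩
    exact hn ⟨a, by simp only; ring⟩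

/-- The local rule of Robinson-Schensted-Knuth growth diagrams, on sequences of row lengths. -/
def rowBump (lam mu nu : ℕ → ℕ) (a : ℕ) : ℕ → ℕ
  | 0 => max (mu 0) (nu 0) + a
  | k + 1 => max (mu (k + 1)) (nu (k + 1)) + min (mu k) (nu k) - lam k

/-- The inverse of the local rule `rowBump`. -/
def rowUnbump (mu nu rho : ℕ → ℕ) (k : ℕ) : ℕ :=
  max (mu (k + 1)) (nu (k + 1)) + min (mu k) (nu k) - rho (k + 1)

/-- The sequence `mu` is obtained from `lam` by adding a horizontal strip. -/
def Interlace (lam mu : ℕ → ℕ) : Prop := ∀ k, mu (k + 1) ≤ lam k ∧ lam k ≤ mu k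

lemma Interlace.zero : Interlace 0 0 := fun _ => ⟨le_rfl, le_rfl⟩

lemma Interlace.antitone_left {lam mu : ℕ → ℕ} (h : Interlace lam mu) : Antitone lam :=
  antitone_nat_of_succ_le fun k => (h (k + 1)).2.trans (h k).1

lemma interlace_rowBump {lam mu nu : ℕ → ℕ} (h1 : Interlace lam mu) (h2 : Interlace lam nu)
    (a : ℕ) : Interlace mu (rowBump lam mu nu a) := by
  intro k
  have e1 := h1 k
  have e2 := h2 k
  rcases k with _ | k
  · simp only [rowBump]; omega
  · have e3 := h1 k
    have e4 := h2 k
    simp only [rowBump]; omega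

lemma interlace_rowUnbump {mu nu rho : ℕ → ℕ} (h1 : Interlace mu rho) (h2 : Interlace nu rho) :
    Interlace (rowUnbump mu nu rho) mu := by
  intro k
  have e1 := h1 k
  have e2 := h2 k
  have e3 := h1 (k + 1)
  have e4 := h2 (k + 1)
  simp only [rowUnbump]; omega

lemma rowBump_comm (lam mu nu : ℕ → ℕ) (a : ℕ) : rowBump lam mu nu a = rowBump lam nu mu a := by
  funext k
  rcases k with _ | k <;> simp only [rowBump, max_comm, min_comm]

lemma rowUnbump_comm (mu nu rho : ℕ → ℕ) : rowUnbump mu nu rho = rowUnbump nu mu rho := by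
  funext k
  simp only [rowUnbump, max_comm, min_comm]

lemma rowUnbump_rowBump {lam mu nu : ℕ → ℕ} (h1 : Interlace lam mu) (h2 : Interlace lam nu)
    (a : ℕ) : rowUnbump mu nu (rowBump lam mu nu a) = lam := by
  funext k
  have e1 := h1 k
  have e2 := h2 k
  simp only [rowUnbump, rowBump]; omega

lemma rowBump_rowUnbump {mu nu rho : ℕ → ℕ} (h1 : Interlace mu rho) (h2 : Interlace nu rho) :
    rowBump (rowUnbump mu nu rho) mu nu (rho 0 - max (mu 0) (nu 0)) = rho := by
  funext k
  rcases k with _ | k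
  · have e1 := h1 0
    have e2 := h2 0
    simp only [rowBump]; omega
  · have e1 := h1 k
    have e2 := h2 k
    have e3 := h1 (k + 1)
    have e4 := h2 (k + 1)
    simp only [rowBump, rowUnbump]; omega

lemma sum_rowBump {lam mu nu : ℕ → ℕ} (h1 : Interlace lam mu) (h2 : Interlace lam nu)
    (a : ℕ) (M : ℕ) :
    ∑ k ∈ range (M + 1), rowBump lam mu nu a k + ∑ k ∈ range M, lam k +
      min (mu M) (nu M) = ∑ k ∈ range (M + 1), mu k + ∑ k ∈ range (M + 1), nu k + a := by
  induction M with
  | zero => simp [rowBump]; omega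
  | succ M ih =>
    rw [Finset.sum_range_succ _ (M + 1), Finset.sum_range_succ lam, Finset.sum_range_succ mu (M + 1),
      Finset.sum_range_succ nu (M + 1)]
    have e1 := h1 M
    have e2 := h2 M
    have : rowBump lam mu nu a (M + 1) =
      max (mu (M + 1)) (nu (M + 1)) + min (mu M) (nu M) - lam M := rfl
    omega

/-- The growth diagram of the matrix `A`. -/
def growth (A : ℕ → ℕ → ℕ) : ℕ → ℕ → ℕ → ℕ
  | 0, _ => 0
  | _ + 1, 0 => 0
  | i + 1, j + 1 => rowBump (growth A i j) (growth A i (j + 1)) (growth A (i + 1) j) (A i j)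

lemma growth_zero_left (A : ℕ → ℕ → ℕ) (j : ℕ) : growth A 0 j = 0 := by rw [growth]

lemma growth_zero_right (A : ℕ → ℕ → ℕ) (i : ℕ) : growth A i 0 = 0 := by
  rcases i with _ | i <;> rw [growth]

lemma growth_succ_succ (A : ℕ → ℕ → ℕ) (i j : ℕ) : growth A (i + 1) (j + 1) =
    rowBump (growth A i j) (growth A i (j + 1)) (growth A (i + 1) j) (A i j) := by rw [growth]

lemma growth_interlace (A : ℕ → ℕ → ℕ) (i : ℕ) : ∀ j,
    Interlace (growth A i j) (growth A i (j + 1)) ∧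
      Interlace (growth A i j) (growth A (i + 1) j) := by
  have step : ∀ i, (∀ j, Interlace (growth A i j) (growth A i (j + 1))) →
      ∀ j, Interlace (growth A i j) (growth A (i + 1) j) := by
    intro i hi j
    induction j with
    | zero => simpa only [growth_zero_right] using Interlace.zero
    | succ j ih =>
      rw [growth_succ_succ]
      exact interlace_rowBump (hi j) ih _
  have horiz : ∀ i j, Interlace (growth A i j) (growth A i (j + 1)) := by
    intro i
    induction i with
    | zero => intro j; simpa only [growth_zero_left] using Interlace.zero
    | succ i ih =>
      intro j
      rw [growth_succ_succ, rowBump_comm]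
      exact interlace_rowBump (step i ih j) (ih j) _
  exact fun j => ⟨horiz i j, step i (horiz i) j⟩

lemma growth_eq_zero (A : ℕ → ℕ → ℕ) (i j k : ℕ) (h : i ≤ k) : growth A i j k = 0 := by
  induction i generalizing k with
  | zero => rw [growth_zero_left]; rfl
  | succ i ih =>
    obtain ⟨k, rfl⟩ := Nat.exists_eq_add_of_lt h
    have := ((growth_interlace A i j).2 (i + k)).1
    rw [ih _ (by omega)] at this
    omega

lemma growth_symm {A : ℕ → ℕ → ℕ} (hA : ∀ i j, A i j = A j i) (i j : ℕ) :
    growth A i j = growth A j i := by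
  induction i generalizing j with
  | zero => rw [growth_zero_left, growth_zero_right]
  | succ i ih =>
    induction j with
    | zero => rw [growth_zero_left, growth_zero_right]
    | succ j ih' => rw [growth_succ_succ, growth_succ_succ, ih, ih, ih', hA, rowBump_comm]

lemma sum_growth (A : ℕ → ℕ → ℕ) {i M : ℕ} (h : i < M) (j : ℕ) :
    ∑ k ∈ range M, growth A (i + 1) j k = ∑ k ∈ range M, growth A i j k + ∑ q ∈ range j, A i q := by
  induction j with
  | zero => simp [growth_zero_right]
  | succ j ih =>
    have := sum_rowBump (growth_interlace A i j).1 (growth_interlace A i j).2 (A i j) M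
    rw [← growth_succ_succ, Finset.sum_range_succ, Finset.sum_range_succ (growth A i (j + 1)),
      Finset.sum_range_succ (growth A (i + 1) j)] at this
    rw [growth_eq_zero A (i + 1) (j + 1) M (by omega), growth_eq_zero A (i + 1) j M (by omega),
      growth_eq_zero A i (j + 1) M (by omega)] at this
    rw [Finset.sum_range_succ (A i)]
    omega

lemma alternatingSum_rowBump {lam mu : ℕ → ℕ} (h : Interlace lam mu) (a M : ℕ) :
    ∑ k ∈ range M, ((rowBump lam mu mu a (2 * k) : ℤ) - rowBump lam mu mu a (2 * k + 1)) =
      ∑ k ∈ range M, ((lam (2 * k) : ℤ) - lam (2 * k + 1)) + a -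
        (rowBump lam mu mu a (2 * M) - mu (2 * M)) := by
  induction M with
  | zero => simp [rowBump]
  | succ M ih =>
    rw [Finset.sum_range_succ, Finset.sum_range_succ, ih]
    have h1 := h (2 * M)
    have h2 := h (2 * M + 1)
    have e1 : rowBump lam mu mu a (2 * M + 1) =
      max (mu (2 * M + 1)) (mu (2 * M + 1)) + min (mu (2 * M)) (mu (2 * M)) - lam (2 * M) := rfl
    have e2 : rowBump lam mu mu a (2 * (M + 1)) =
      max (mu (2 * M + 2)) (mu (2 * M + 2)) + min (mu (2 * M + 1)) (mu (2 * M + 1)) -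
        lam (2 * M + 1) := rfl
    rw [show 2 * (M + 1) = 2 * M + 2 by ring] at *
    omega

lemma alternatingSum_growth {A : ℕ → ℕ → ℕ} (hA : ∀ i j, A i j = A j i) (M i : ℕ) (h : i ≤ 2 * M) :
    ∑ k ∈ range M, ((growth A i i (2 * k) : ℤ) - growth A i i (2 * k + 1)) =
      ∑ p ∈ range i, (A p p : ℤ) := by
  induction i with
  | zero => simp [growth_zero_left]
  | succ i ih =>
    have := alternatingSum_rowBump (growth_interlace A i i).1 (A i i) M
    have e : growth A (i + 1) (i + 1) =
        rowBump (growth A i i) (growth A i (i + 1)) (growth A i (i + 1)) (A i i) := by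
      rw [growth_succ_succ, growth_symm hA (i + 1) i]
    rw [← e, ih (by omega), growth_eq_zero _ _ _ _ h, growth_eq_zero _ _ _ _ (by omega)] at this
    rw [this, Finset.sum_range_succ]
    simp

lemma forall_eq_of_alternatingSum_eq_zero {f : ℕ → ℕ} (hf : Antitone f) {M : ℕ}
    (hM : ∀ k, 2 * M ≤ k → f k = 0)
    (h : ∑ k ∈ range M, ((f (2 * k) : ℤ) - f (2 * k + 1)) = 0) (k : ℕ) :
    f (2 * k) = f (2 * k + 1) := by
  rcases lt_or_ge k M with hk | hk
  · have := (Finset.sum_eq_zero_iff_of_nonneg (fun k _ => by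
      have := hf (show 2 * k ≤ 2 * k + 1 by omega); omega)).1 h k (mem_range.2 hk)
    omega
  · rw [hM _ (by omega), hM _ (by omega)]

/-- The table obtained from the boundary values `c` by the inverse local rule, indexed from the
far corner `(N, N)`. -/
def ungrowth (N : ℕ) (c : ℕ → ℕ → ℕ) : ℕ → ℕ → ℕ → ℕ
  | 0, q => c (N - q)
  | p + 1, 0 => c (N - (p + 1))
  | p + 1, q + 1 =>
    rowUnbump (ungrowth N c p (q + 1)) (ungrowth N c (p + 1) q) (ungrowth N c p q)

lemma ungrowth_zero_left (N : ℕ) (c : ℕ → ℕ → ℕ) (q : ℕ) : ungrowth N c 0 q = c (N - q) := by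
  rw [ungrowth]

lemma ungrowth_zero_right (N : ℕ) (c : ℕ → ℕ → ℕ) (p : ℕ) : ungrowth N c p 0 = c (N - p) := by
  rcases p with _ | p <;> rw [ungrowth]

lemma ungrowth_succ_succ (N : ℕ) (c : ℕ → ℕ → ℕ) (p q : ℕ) : ungrowth N c (p + 1) (q + 1) =
    rowUnbump (ungrowth N c p (q + 1)) (ungrowth N c (p + 1) q) (ungrowth N c p q) := by
  rw [ungrowth]

lemma ungrowth_symm (N : ℕ) (c : ℕ → ℕ → ℕ) (p q : ℕ) : ungrowth N c p q = ungrowth N c q p := by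
  induction p generalizing q with
  | zero => rw [ungrowth_zero_left, ungrowth_zero_right]
  | succ p ih =>
    induction q with
    | zero => rw [ungrowth_zero_left, ungrowth_zero_right]
    | succ q ih' => rw [ungrowth_succ_succ, ungrowth_succ_succ, ih, ih, ih', rowUnbump_comm]

lemma ungrowth_interlace {N : ℕ} {c : ℕ → ℕ → ℕ} (h0 : c 0 = 0)
    (hc : ∀ j < N, Interlace (c j) (c (j + 1))) (p : ℕ) : ∀ q,
    Interlace (ungrowth N c p (q + 1)) (ungrowth N c p q) := by
  have hedge : ∀ q, Interlace (c (N - (q + 1))) (c (N - q)) := by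
    intro q
    rcases lt_or_ge q N with h | h
    · have := hc (N - (q + 1)) (by omega)
      rwa [show N - (q + 1) + 1 = N - q by omega] at this
    · rw [show N - (q + 1) = 0 by omega, show N - q = 0 by omega, h0]
      exact Interlace.zero
  induction p with
  | zero => intro q; rw [ungrowth_zero_left, ungrowth_zero_left]; exact hedge q
  | succ p ih =>
    have hv : ∀ q, Interlace (ungrowth N c (p + 1) q) (ungrowth N c p q) := by
      intro q
      induction q with
      | zero => rw [ungrowth_zero_right, ungrowth_zero_right]; exact hedge p
      | succ q ih' =>
        rw [ungrowth_succ_succ]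
        exact interlace_rowUnbump (ih q) ih'
    intro q
    rw [ungrowth_succ_succ, rowUnbump_comm]
    exact interlace_rowUnbump (hv q) (ih q)

lemma ungrowth_eq_zero {N : ℕ} {c : ℕ → ℕ → ℕ} (h0 : c 0 = 0)
    (hc : ∀ j < N, Interlace (c j) (c (j + 1))) (q : ℕ) : ungrowth N c N q = 0 := by
  induction q with
  | zero => rw [ungrowth_zero_right, Nat.sub_self, h0]
  | succ q ih =>
    funext k
    have := (ungrowth_interlace h0 hc N q k).2
    rw [ih] at this
    simpa using this

lemma ungrowth_growth {A : ℕ → ℕ → ℕ} (hA : ∀ i j, A i j = A j i) (N : ℕ) (c : ℕ → ℕ → ℕ)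
    (hc : ∀ j ≤ N, c j = growth A j N) (p q : ℕ) (hp : p ≤ N) (hq : q ≤ N) :
    ungrowth N c p q = growth A (N - p) (N - q) := by
  induction p generalizing q with
  | zero => rw [ungrowth_zero_left, hc _ (by omega), growth_symm hA, Nat.sub_zero]
  | succ p ih =>
    induction q with
    | zero => rw [ungrowth_zero_right, hc _ (by omega), Nat.sub_zero]
    | succ q ih' =>
      rw [ungrowth_succ_succ, ih _ (by omega) hq, ih _ (by omega) (by omega), ih' (by omega),
        show N - p = N - (p + 1) + 1 by omega, show N - q = N - (q + 1) + 1 by omega,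
        growth_succ_succ, rowUnbump_comm, rowUnbump_rowBump]
      · exact (growth_interlace A _ _).1
      · exact (growth_interlace A _ _).2

/-- The matrix whose growth diagram has boundary values `c`. -/
def ungrowthMatrix (N : ℕ) (c : ℕ → ℕ → ℕ) (i j : ℕ) : ℕ :=
  if i < N ∧ j < N then ungrowth N c (N - (i + 1)) (N - (j + 1)) 0 -
    max (ungrowth N c (N - i) (N - (j + 1)) 0) (ungrowth N c (N - (i + 1)) (N - j) 0) else 0

lemma ungrowthMatrix_symm (N : ℕ) (c : ℕ → ℕ → ℕ) (i j : ℕ) :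
    ungrowthMatrix N c i j = ungrowthMatrix N c j i := by
  unfold ungrowthMatrix
  rw [ungrowth_symm N c (N - (i + 1)) (N - (j + 1)), ungrowth_symm N c (N - i),
    ungrowth_symm N c (N - (i + 1)) (N - j), max_comm]
  simp only [and_comm]

lemma growth_ungrowthMatrix {N : ℕ} {c : ℕ → ℕ → ℕ} (h0 : c 0 = 0)
    (hc : ∀ j < N, Interlace (c j) (c (j + 1))) (i j : ℕ) (hi : i ≤ N) (hj : j ≤ N) :
    growth (ungrowthMatrix N c) i j = ungrowth N c (N - i) (N - j) := by
  induction i generalizing j with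
  | zero => rw [growth_zero_left, Nat.sub_zero, ungrowth_eq_zero h0 hc]
  | succ i ih =>
    induction j with
    | zero => rw [growth_zero_right, Nat.sub_zero, ungrowth_symm, ungrowth_eq_zero h0 hc]
    | succ j ih' =>
      rw [growth_succ_succ, ih _ (by omega) hj, ih _ (by omega) (by omega), ih' (by omega),
        ungrowthMatrix, if_pos ⟨by omega, by omega⟩]
      obtain ⟨p, hp⟩ : ∃ p, N - (i + 1) = p := ⟨_, rfl⟩
      obtain ⟨q, hq⟩ : ∃ q, N - (j + 1) = q := ⟨_, rfl⟩
      rw [hp, hq, show N - i = p + 1 by omega, show N - j = q + 1 by omega, ungrowth_succ_succ,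
        rowUnbump_comm, rowBump_rowUnbump]
      · rw [ungrowth_symm, ungrowth_symm N c p q]; exact ungrowth_interlace h0 hc q p
      · exact ungrowth_interlace h0 hc p q

lemma growth_mono (A : ℕ → ℕ → ℕ) {i i' j j' : ℕ} (hi : i ≤ i') (hj : j ≤ j') (k : ℕ) :
    growth A i j k ≤ growth A i' j' k :=
  (monotone_nat_of_le_succ (f := fun i => growth A i j k)
    (fun i => ((growth_interlace A i j).2 k).2) hi).trans
  (monotone_nat_of_le_succ (f := fun j => growth A i' j k)
    (fun j => ((growth_interlace A i' j).1 k).2) hj)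

/-- The permutation matrix of `π`, extended by zero. -/
def permMatrix {N : ℕ} (π : Equiv.Perm (Fin N)) (i j : ℕ) : ℕ :=
  if h : i < N then (if (π ⟨i, h⟩ : ℕ) = j then 1 else 0) else 0

lemma permMatrix_apply {N : ℕ} (π : Equiv.Perm (Fin N)) (i j : Fin N) :
    permMatrix π i j = if π i = j then 1 else 0 := by
  simp [permMatrix, Fin.ext_iff]

lemma permMatrix_eq_zero_or {N : ℕ} (π : Equiv.Perm (Fin N)) (i j : ℕ) :
    permMatrix π i j = 0 ∨
      (permMatrix π i j = 1 ∧ ∃ h : i < N, (π ⟨i, h⟩ : ℕ) = j) := by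
  unfold permMatrix
  split_ifs with h h' <;> simp_all

lemma permMatrix_symm {N : ℕ} {π : Equiv.Perm (Fin N)} (hπ : π * π = 1) (i j : ℕ) :
    permMatrix π i j = permMatrix π j i := by
  have key : ∀ i j, permMatrix π i j = 1 → permMatrix π j i = 1 := by
    intro i j h
    rcases permMatrix_eq_zero_or π i j with h' | ⟨_, hi, rfl⟩
    · omega
    · have : π (π ⟨i, hi⟩) = ⟨i, hi⟩ := by
        rw [← Equiv.Perm.mul_apply, hπ, Equiv.Perm.one_apply]
      simp [permMatrix, this]
  have h1 := key i j
  have h2 := key j i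
  rcases permMatrix_eq_zero_or π i j with h | ⟨h, _⟩ <;>
    rcases permMatrix_eq_zero_or π j i with h' | ⟨h', _⟩ <;> omega

lemma sum_permMatrix {N : ℕ} (π : Equiv.Perm (Fin N)) {i : ℕ} (hi : i < N) :
    ∑ q ∈ range N, permMatrix π i q = 1 := by
  simp [permMatrix, hi]

lemma permMatrix_injective {N : ℕ} {π σ : Equiv.Perm (Fin N)}
    (h : ∀ i < N, ∀ j < N, permMatrix π i j = permMatrix σ i j) : π = σ := by
  ext i
  have := h i i.2 (σ i) (σ i).2
  rw [permMatrix_apply, permMatrix_apply, if_pos rfl] at this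
  by_contra hne
  rw [if_neg (fun e => hne (by rw [e]))] at this
  omega

lemma card_le_growth {N : ℕ} (π : Equiv.Perm (Fin N)) (k : ℕ) (f : Fin k → Fin N)
    (hf : StrictMono f) (hf' : StrictMono fun i => π (f i)) :
    k ≤ growth (permMatrix π) N N 0 := by
  have key : ∀ s (hs : s < k),
      s + 1 ≤ growth (permMatrix π) (f ⟨s, hs⟩ + 1) (π (f ⟨s, hs⟩) + 1) 0 := by
    intro s
    induction s with
    | zero =>
      intro hs
      rw [growth_succ_succ, rowBump, permMatrix_apply, if_pos rfl]
      omega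
    | succ s ih =>
      intro hs
      have h1 := ih (by omega)
      have h2 : (f ⟨s, by omega⟩ : ℕ) < f ⟨s + 1, hs⟩ := hf (Fin.mk_lt_mk.2 (Nat.lt_succ_self s))
      have h3 : (π (f ⟨s, by omega⟩) : ℕ) < π (f ⟨s + 1, hs⟩) :=
        hf' (Fin.mk_lt_mk.2 (Nat.lt_succ_self s))
      have h4 := growth_mono (permMatrix π) (Nat.succ_le_of_lt h2)
        (show (π (f ⟨s, by omega⟩) : ℕ) + 1 ≤ π (f ⟨s + 1, hs⟩) + 1 by omega) 0
      rw [growth_succ_succ, rowBump, permMatrix_apply, if_pos rfl]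
      simp only [Nat.succ_eq_add_one] at h4
      omega
  rcases k with _ | k
  · exact Nat.zero_le _
  · exact (key k (Nat.lt_succ_self k)).trans
      (growth_mono _ (Nat.succ_le_of_lt (Fin.is_lt _)) (Nat.succ_le_of_lt (Fin.is_lt _)) 0)

lemma exists_strictMonoOn_card_eq_growth {N : ℕ} (π : Equiv.Perm (Fin N)) (i j : ℕ) :
    ∃ S : Finset (Fin N), S.card = growth (permMatrix π) i j 0 ∧
      (∀ a ∈ S, (a : ℕ) < i ∧ (π a : ℕ) < j) ∧ StrictMonoOn π (S : Set (Fin N)) := by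
  induction i generalizing j with
  | zero => exact ⟨∅, by simp [growth_zero_left], by simp, by simp [StrictMonoOn]⟩
  | succ i ih =>
    induction j with
    | zero => exact ⟨∅, by simp [growth_zero_right], by simp, by simp [StrictMonoOn]⟩
    | succ j ih' =>
      obtain ⟨S, hS, hb, hm⟩ : ∃ S : Finset (Fin N),
          S.card = max (growth (permMatrix π) i (j + 1) 0) (growth (permMatrix π) (i + 1) j 0) ∧
          ((∀ a ∈ S, (a : ℕ) < i ∧ (π a : ℕ) < j + 1) ∨
            (∀ a ∈ S, (a : ℕ) < i + 1 ∧ (π a : ℕ) < j)) ∧ StrictMonoOn π (S : Set (Fin N)) := by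
        obtain ⟨S, hS, hb, hm⟩ := ih (j + 1)
        obtain ⟨T, hT, hb', hm'⟩ := ih'
        rcases le_total (growth (permMatrix π) (i + 1) j 0) (growth (permMatrix π) i (j + 1) 0)
          with h | h
        · exact ⟨S, by rw [max_eq_left h, hS], Or.inl hb, hm⟩
        · exact ⟨T, by rw [max_eq_right h, hT], Or.inr hb', hm'⟩
      rw [growth_succ_succ, rowBump]
      rcases permMatrix_eq_zero_or π i j with h | ⟨h, hi, hj⟩
      · refine ⟨S, by rw [hS, h, add_zero], fun a ha => ?_, hm⟩
        rcases hb with hb | hb <;> have := hb a ha <;> omega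
      · have hb' : ∀ a ∈ S, (a : ℕ) < i ∧ (π a : ℕ) < j := by
          intro a ha
          have hiff : (a : ℕ) = i ↔ (π a : ℕ) = j := by
            rw [← hj, ← Fin.ext_iff, π.injective.eq_iff, Fin.ext_iff]
          rcases hb with hb | hb <;> have := hb a ha <;> omega
        have hnot : (⟨i, hi⟩ : Fin N) ∉ S := fun hmem => by
          have := (hb' _ hmem).1
          simp at this
        refine ⟨insert ⟨i, hi⟩ S, by rw [card_insert_of_notMem hnot, hS, h], ?_, ?_⟩
        · intro a ha
          rcases mem_insert.1 ha with rfl | ha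
          · simp [hj]
          · have := hb' a ha; omega
        · intro a ha b hb hab
          rw [mem_coe, mem_insert] at ha hb
          rcases ha with rfl | ha <;> rcases hb with rfl | hb
          · exact absurd hab (lt_irrefl _)
          · have := (hb' b hb).1
            have h2 : i < (b : ℕ) := hab
            omega
          · have := (hb' a ha).2
            exact Fin.lt_def.2 (by rw [hj]; exact this)
          · exact hm ha hb hab

lemma lisLE_iff {N : ℕ} (π : Equiv.Perm (Fin N)) (m : ℕ) :
    lisLE π m ↔ growth (permMatrix π) N N 0 ≤ m := by
  refine ⟨fun h => ?_, fun h k f hf hf' => (card_le_growth π k f hf hf').trans h⟩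
  obtain ⟨S, hS, -, hm⟩ := exists_strictMonoOn_card_eq_growth π N N
  rw [← hS]
  exact h _ (S.orderEmbOfFin rfl) (S.orderEmbOfFin rfl).strictMono fun a b hab =>
    hm (S.orderEmbOfFin_mem rfl a) (S.orderEmbOfFin_mem rfl b)
      ((S.orderEmbOfFin rfl).strictMono hab)

lemma exists_eq_add_single {f g : ℕ → ℕ} {M : ℕ} (hfg : f ≤ g) (hf : ∀ k, M ≤ k → f k = 0)
    (hg : ∀ k, M ≤ k → g k = 0) (h : ∑ k ∈ range M, g k = ∑ k ∈ range M, f k + 1) :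
    ∃ r, g = f + Pi.single r 1 := by
  have h1 : ∑ k ∈ range M, (g k - f k) = 1 := by
    have : ∑ k ∈ range M, (g k - f k) + ∑ k ∈ range M, f k = ∑ k ∈ range M, g k := by
      rw [← Finset.sum_add_distrib]
      exact Finset.sum_congr rfl fun k _ => Nat.sub_add_cancel (hfg k)
    omega
  obtain ⟨r, hr, hr1, hr0⟩ : ∃ r ∈ range M, g r - f r = 1 ∧
      ∀ k ∈ range M, k ≠ r → g k - f k = 0 := by
    obtain ⟨r, hr, hr'⟩ := Finset.exists_ne_zero_of_sum_ne_zero (h1.trans_ne one_ne_zero)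
    have h2 := Finset.add_sum_erase _ (fun k => g k - f k) hr
    simp only [h1] at h2
    refine ⟨r, hr, by omega, fun k hk hkr => ?_⟩
    have h3 : ∑ k ∈ (range M).erase r, (g k - f k) = 0 := by omega
    exact Finset.sum_eq_zero_iff.1 h3 k (mem_erase.2 ⟨hkr, hk⟩)
  refine ⟨r, funext fun k => ?_⟩
  have hk' : f k ≤ g k := hfg k
  rcases eq_or_ne k r with rfl | hkr
  · simp; omega
  · simp only [Pi.add_apply, Pi.single_apply, if_neg hkr]
    rcases lt_or_ge k M with hk | hk
    · have := hr0 k (mem_range.2 hk) hkr; omega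
    · rw [hf k hk, hg k hk, add_zero]

lemma Interlace.of_single {f : ℕ → ℕ} {r : ℕ} (hf : Antitone f)
    (hg : Antitone (f + Pi.single r 1)) : Interlace f (f + Pi.single r 1) := by
  intro k
  have h1 := hf (Nat.le_succ k)
  have h2 := hg (Nat.le_succ k)
  simp only [Pi.add_apply, Pi.single_apply, Nat.succ_eq_add_one] at *
  refine ⟨?_, by omega⟩
  split_ifs at * <;> omega

/-- Saturated chains `c 0, …, c n` of partitions (given by their row lengths) starting at `κ` and
ending at a partition with rows of length at most `m` that are equal in pairs; the sequence `c` is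
constant from `n` on. -/
structure BoxChain (m n : ℕ) (κ : ℕ → ℕ) (c : ℕ → ℕ → ℕ) : Prop where
  start : c 0 = κ
  step : ∀ j < n, ∃ r, c (j + 1) = c j + Pi.single r 1
  antitone : ∀ j ≤ n, Antitone (c j)
  stable : ∀ j, n ≤ j → c j = c n
  le : c n 0 ≤ m
  paired : ∀ i, c n (2 * i) = c n (2 * i + 1)

lemma BoxChain.interlace {m n : ℕ} {κ : ℕ → ℕ} {c : ℕ → ℕ → ℕ} (h : BoxChain m n κ c) :
    ∀ j < n, Interlace (c j) (c (j + 1)) := by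
  intro j hj
  obtain ⟨r, hr⟩ := h.step j hj
  have h2 := h.antitone (j + 1) (by omega)
  rw [hr] at h2 ⊢
  exact Interlace.of_single (h.antitone j hj.le) h2

/-- The chain of partitions on the boundary of the growth diagram of `π`. -/
def boundaryChain {N : ℕ} (π : Equiv.Perm (Fin N)) (j : ℕ) : ℕ → ℕ :=
  growth (permMatrix π) (min j N) N

lemma sum_diag_permMatrix {N : ℕ} (π : Equiv.Perm (Fin N)) :
    ∑ p ∈ range N, (permMatrix π p p : ℤ) = 0 ↔ ∀ x, π x ≠ x := by
  rw [Finset.sum_eq_zero_iff_of_nonneg (fun _ _ => by positivity)]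
  constructor
  · intro h x hx
    have := h x (mem_range.2 x.2)
    rw [permMatrix_apply, if_pos hx] at this
    simp at this
  · intro h p hp
    have := permMatrix_apply π ⟨p, mem_range.1 hp⟩ ⟨p, mem_range.1 hp⟩
    rw [if_neg (h _)] at this
    exact_mod_cast this

lemma boxChain_boundaryChain {m n : ℕ} {π : Equiv.Perm (Fin (2 * n))} (h1 : π * π = 1)
    (h2 : ∀ x, π x ≠ x) (h3 : lisLE π m) : BoxChain m (2 * n) 0 (boundaryChain π) where
  start := by rw [boundaryChain, Nat.zero_min, growth_zero_left]
  step := by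
    intro j hj
    rw [boundaryChain, boundaryChain, min_eq_left hj.le, min_eq_left (Nat.succ_le_of_lt hj)]
    refine exists_eq_add_single (M := 2 * n)
      (fun k => ((growth_interlace (permMatrix π) j (2 * n)).2 k).2)
      (fun k hk => growth_eq_zero _ _ _ _ (by omega)) (fun k hk => growth_eq_zero _ _ _ _ (by omega))
      ?_
    rw [sum_growth _ hj, sum_permMatrix π hj]
  antitone := fun j _ => (growth_interlace (permMatrix π) _ _).1.antitone_left
  stable := by
    intro j hj
    rw [boundaryChain, boundaryChain, min_eq_right hj, min_self]
  le := by
    rw [boundaryChain, min_self]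
    exact (lisLE_iff π m).1 h3
  paired := by
    rw [boundaryChain, min_self]
    refine forall_eq_of_alternatingSum_eq_zero (growth_interlace _ _ _).1.antitone_left
      (M := n) (fun k hk => growth_eq_zero _ _ _ _ hk) ?_
    rw [alternatingSum_growth (permMatrix_symm h1) _ _ le_rfl, sum_diag_permMatrix]
    exact h2

lemma eq_of_growth_eq {A B : ℕ → ℕ → ℕ} {N : ℕ}
    (h : ∀ i ≤ N, ∀ j ≤ N, growth A i j = growth B i j) : ∀ i < N, ∀ j < N, A i j = B i j := by
  intro i hi j hj
  have h1 := congrFun (h (i + 1) hi (j + 1) hj) 0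
  rw [growth_succ_succ, growth_succ_succ, rowBump, rowBump, h i hi.le (j + 1) hj,
    h (i + 1) hi j hj.le] at h1
  omega

lemma boundaryChain_injective {N : ℕ} {π σ : Equiv.Perm (Fin N)} (hπ : π * π = 1) (hσ : σ * σ = 1)
    (h : boundaryChain π = boundaryChain σ) : π = σ := by
  refine permMatrix_injective (eq_of_growth_eq fun i hi j hj => ?_)
  have h1 := ungrowth_growth (permMatrix_symm hπ) N (boundaryChain π)
    (fun j hj => by rw [boundaryChain, min_eq_left hj]) (N - i) (N - j) (by omega) (by omega)
  have h2 := ungrowth_growth (permMatrix_symm hσ) N (boundaryChain σ)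
    (fun j hj => by rw [boundaryChain, min_eq_left hj]) (N - i) (N - j) (by omega) (by omega)
  rw [h, h2, Nat.sub_sub_self hi, Nat.sub_sub_self hj] at h1
  exact h1.symm

lemma exists_perm_of_symm {N : ℕ} {A : ℕ → ℕ → ℕ} (hA : ∀ i j, A i j = A j i)
    (hrow : ∀ i < N, ∑ q ∈ range N, A i q = 1) (hout : ∀ i j, ¬(i < N ∧ j < N) → A i j = 0) :
    ∃ π : Equiv.Perm (Fin N), π * π = 1 ∧ permMatrix π = A := by
  have hex : ∀ i : Fin N, ∃ j : Fin N, ∀ k, A i k = if (j : ℕ) = k then 1 else 0 := by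
    intro i
    obtain ⟨j, hj, hj'⟩ :=
      Finset.exists_ne_zero_of_sum_ne_zero ((hrow i i.2).trans_ne one_ne_zero)
    have h2 := Finset.add_sum_erase _ (fun k => A i k) hj
    simp only [hrow i i.2] at h2
    refine ⟨⟨j, mem_range.1 hj⟩, fun k => ?_⟩
    split_ifs with hk
    · have : j = k := hk
      subst this
      omega
    · by_cases hkN : k < N
      · have h3 : ∑ k ∈ (range N).erase j, A i k = 0 := by omega
        exact Finset.sum_eq_zero_iff.1 h3 k (mem_erase.2 ⟨fun e => hk e.symm, mem_range.2 hkN⟩)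
      · exact hout _ _ fun h => hkN h.2
  choose f hf using hex
  have hinv : Function.Involutive f := by
    intro i
    have h1 := hf i (f i)
    rw [if_pos rfl, hA, hf (f i) i] at h1
    by_contra hne
    rw [if_neg (fun e => hne (Fin.ext e))] at h1
    omega
  refine ⟨hinv.toPerm, ?_, ?_⟩
  · ext i
    simp [hinv i]
  · funext i j
    by_cases h : i < N
    · rw [permMatrix, dif_pos h]
      exact (hf ⟨i, h⟩ j).symm
    · rw [permMatrix, dif_neg h]
      exact (hout _ _ fun h' => h h'.1).symm

lemma exists_boundaryChain_eq {m n : ℕ} {c : ℕ → ℕ → ℕ} (hc : BoxChain m (2 * n) 0 c) :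
    ∃ π : Equiv.Perm (Fin (2 * n)), (π * π = 1 ∧ (∀ x, π x ≠ x) ∧ lisLE π m) ∧
      boundaryChain π = c := by
  set N := 2 * n with hN
  have hg : ∀ i ≤ N, growth (ungrowthMatrix N c) i N = c i := by
    intro i hi
    rw [growth_ungrowthMatrix hc.start hc.interlace i N hi le_rfl, Nat.sub_self,
      ungrowth_zero_right, Nat.sub_sub_self hi]
  have hzero : ∀ i ≤ N, ∀ k, N ≤ k → c i k = 0 := by
    intro i hi k hk
    rw [← hg i hi]
    exact growth_eq_zero _ _ _ _ (by omega)
  obtain ⟨π, hπ, hπA⟩ := exists_perm_of_symm (N := N) (A := ungrowthMatrix N c)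
    (ungrowthMatrix_symm N c) (by
      intro i hi
      have h1 := sum_growth (ungrowthMatrix N c) hi N
      rw [hg _ hi, hg _ hi.le] at h1
      obtain ⟨r, hr⟩ := hc.step i hi
      have hrN : r < N := by
        by_contra hrN
        have := hzero (i + 1) hi r (by omega)
        rw [hr] at this
        simp at this
      rw [hr] at h1
      simp only [Pi.add_apply, Finset.sum_add_distrib] at h1
      have h2 : ∑ k ∈ range N, (Pi.single r 1 : ℕ → ℕ) k = 1 := by
        simp [Pi.single_apply, hrN]
      omega) (fun i j h => if_neg h)
  have hb : boundaryChain π = c := by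
    funext j
    rw [boundaryChain, hπA, hg _ (min_le_right _ _)]
    rcases le_total j N with h | h
    · rw [min_eq_left h]
    · rw [min_eq_right h, hc.stable j h]
  have hcN : growth (permMatrix π) N N = c N := by rw [hπA, hg N le_rfl]
  refine ⟨π, ⟨hπ, ?_, ?_⟩, hb⟩
  · rw [← sum_diag_permMatrix, ← alternatingSum_growth (permMatrix_symm hπ) n N le_rfl, hcN]
    refine Finset.sum_eq_zero fun k _ => ?_
    rw [hc.paired k, sub_self]
  · rw [lisLE_iff, hcN]
    exact hc.le

lemma fpfInvCount_eq_card_boxChain (n m : ℕ) :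
    fpfInvCount n m = Nat.card {c // BoxChain m (2 * n) 0 c} := by
  refine Nat.card_congr (Equiv.ofBijective
    (fun π => ⟨boundaryChain π.1, boxChain_boundaryChain π.2.1 π.2.2.1 π.2.2.2⟩) ⟨?_, ?_⟩)
  · rintro ⟨π, hπ⟩ ⟨σ, hσ⟩ h
    exact Subtype.ext (boundaryChain_injective hπ.1 hσ.1 (congrArg Subtype.val h))
  · rintro ⟨c, hc⟩
    obtain ⟨π, hπ, h⟩ := exists_boundaryChain_eq hc
    exact ⟨⟨π, hπ⟩, Subtype.ext h⟩

/-- The column lengths of the partition with row lengths `x`. -/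
def conj {m : ℕ} (x : Fin m → ℕ) (r : ℕ) : ℕ := #{i : Fin m | r < x i}

lemma conj_zero (m : ℕ) : conj (0 : Fin m → ℕ) = 0 := by
  funext r
  simp [conj]

lemma conj_antitone {m : ℕ} (x : Fin m → ℕ) : Antitone (conj x) := fun _ _ h =>
  card_le_card (monotone_filter_right _ fun _ _ h' => lt_of_le_of_lt h h')

lemma conj_le {m : ℕ} (x : Fin m → ℕ) (r : ℕ) : conj x r ≤ m :=
  (card_le_univ _).trans_eq (Fintype.card_fin m)

lemma conj_add_single {m : ℕ} (x : Fin m → ℕ) (j : Fin m) :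
    conj (x + Pi.single j 1) = conj x + Pi.single (x j) 1 := by
  funext r
  simp only [conj, Pi.add_apply, card_filter]
  rw [← Finset.add_sum_erase _ _ (mem_univ j), ← Finset.add_sum_erase _ _ (mem_univ j)]
  have : ∑ i ∈ univ.erase j, (if r < x i + (Pi.single j 1 : Fin m → ℕ) i then 1 else 0) =
      ∑ i ∈ univ.erase j, if r < x i then 1 else 0 :=
    Finset.sum_congr rfl fun i hi => by simp [(mem_erase.1 hi).1]
  rw [this]
  simp only [Pi.single_eq_same, Pi.single_apply]
  split_ifs <;> omega

lemma lt_of_monotone_add_single {m : ℕ} {x : Fin m → ℕ} {j : Fin m}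
    (h : Monotone (x + Pi.single j 1)) {i : Fin m} (hi : j < i) : x j < x i := by
  have := h hi.le
  simp only [Pi.add_apply, Pi.single_eq_same, Pi.single_apply, if_neg hi.ne'] at this
  omega

lemma eq_of_monotone_add_single {m : ℕ} {x : Fin m → ℕ} {i j : Fin m}
    (hi : Monotone (x + Pi.single i 1)) (hj : Monotone (x + Pi.single j 1)) (h : x i = x j) :
    i = j := by
  rcases lt_trichotomy i j with hij | hij | hij
  · have := lt_of_monotone_add_single hi hij; omega
  · exact hij
  · have := lt_of_monotone_add_single hj hij; omega

lemma monotone_add_single {m : ℕ} {x : Fin m → ℕ} (hx : Monotone x) {j : Fin m}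
    (h : ∀ i, j < i → x j < x i) : Monotone (x + Pi.single j 1) := by
  intro a b hab
  have h1 := hx hab
  simp only [Pi.add_apply, Pi.single_apply]
  rcases eq_or_lt_of_le hab with rfl | hlt
  · exact le_rfl
  · by_cases ha : a = j
    · subst ha
      have := h b hlt
      rw [if_pos rfl, if_neg hlt.ne']
      omega
    · rw [if_neg ha]
      omega

lemma exists_monotone_add_single {m : ℕ} {x : Fin m → ℕ} (hx : Monotone x) {r : ℕ}
    (hr : Antitone (conj x + Pi.single r 1)) (hm : conj x 0 + (Pi.single r 1 : ℕ → ℕ) 0 ≤ m) :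
    ∃ j, Monotone (x + Pi.single j 1) ∧ x j = r := by
  have hex : ∃ j, x j = r := by
    rcases r with _ | r
    · by_contra! hne
      have : conj x 0 = m := by
        rw [conj, filter_true_of_mem fun i _ => Nat.pos_of_ne_zero (hne i), card_univ,
          Fintype.card_fin]
      simp [this] at hm
    · have h1 : conj x (r + 1) < conj x r := by
        have := hr (Nat.le_succ r)
        simpa [Pi.single_apply] using this
      by_contra! hne
      refine h1.ne (congrArg card (filter_congr fun i _ => ?_))
      have := hne i
      omega
  have hne : ({i | x i = r} : Finset (Fin m)).Nonempty := by
    obtain ⟨j, hj⟩ := hex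
    exact ⟨j, by simp [hj]⟩
  have hmem := max'_mem _ hne
  set j := max' _ hne with hjdef
  have hj : x j = r := by simpa using hmem
  refine ⟨j, monotone_add_single hx fun i hi => lt_of_le_of_ne (hx hi.le) fun e => ?_, hj⟩
  have : i ≤ j := le_max' _ _ (by simp [← e, hj])
  exact absurd hi (not_lt.2 this)

lemma forall_even_iff_conj {m : ℕ} {x : Fin m → ℕ} :
    (∀ i, Even (x i)) ↔ ∀ i, conj x (2 * i) = conj x (2 * i + 1) := by
  constructor
  · intro h i
    refine congrArg card (filter_congr fun a _ => ?_)
    obtain ⟨b, hb⟩ := h a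
    omega
  · intro h a
    by_contra hodd
    rw [Nat.not_even_iff_odd] at hodd
    obtain ⟨b, hb⟩ := hodd
    have hsub : ({i | 2 * b + 1 < x i} : Finset (Fin m)) ⊆ ({i | 2 * b < x i} : Finset (Fin m)) :=
      monotone_filter_right _ fun _ _ h' => lt_trans (Nat.lt_succ_self _) h'
    have heq := eq_of_subset_of_card_le hsub (h b).le
    have hmem : a ∈ ({i | 2 * b < x i} : Finset (Fin m)) := by simp [hb]
    rw [← heq] at hmem
    simp [hb] at hmem

lemma BoxChain.zero_le {m n : ℕ} {κ : ℕ → ℕ} {c : ℕ → ℕ → ℕ} (h : BoxChain m n κ c) (j : ℕ)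
    (hj : j ≤ n) : c j 0 ≤ m := by
  induction hj using Nat.decreasingInduction with
  | of_succ j hj ih => exact ((h.interlace j hj) 0).2.trans ih
  | self => exact h.le

lemma BoxChain.tail {m n : ℕ} {κ : ℕ → ℕ} {c : ℕ → ℕ → ℕ} (h : BoxChain m (n + 1) κ c) :
    BoxChain m n (c 1) fun j => c (j + 1) where
  start := rfl
  step := fun j hj => h.step (j + 1) (by omega)
  antitone := fun j hj => h.antitone (j + 1) (by omega)
  stable := fun j hj => h.stable (j + 1) (by omega)
  le := h.le
  paired := h.paired

lemma BoxChain.cons {m n r : ℕ} {κ κ' : ℕ → ℕ} {c : ℕ → ℕ → ℕ} (hκ : Antitone κ)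
    (hr : κ' = κ + Pi.single r 1) (h : BoxChain m n κ' c) :
    BoxChain m (n + 1) κ fun j => Nat.casesOn j κ c where
  start := rfl
  step := by
    rintro (_ | j) hj
    · exact ⟨r, h.start.trans hr⟩
    · exact h.step j (by omega)
  antitone := by
    rintro (_ | j) hj
    · exact hκ
    · exact h.antitone j (by omega)
  stable := by
    rintro (_ | j) hj
    · omega
    · exact h.stable j (by omega)
  le := h.le
  paired := h.paired

/-- Chains starting at `conj x` correspond to chains starting at `conj (x + Pi.single j 1)` for
some admissible `j`, by prepending `conj x`. -/
lemma bijective_boxChain_cons {m n : ℕ} {x : Fin m → ℕ} (hx : Monotone x) :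
    Function.Bijective fun p : (Σ j : {j : Fin m // Monotone (x + Pi.single j 1)},
        {c // BoxChain m n (conj (x + Pi.single j.1 1)) c}) =>
      (⟨fun k => Nat.casesOn k (conj x) p.2.1,
        BoxChain.cons (conj_antitone x) (conj_add_single x p.1.1) p.2.2⟩ :
          {c // BoxChain m (n + 1) (conj x) c}) := by
  constructor
  · rintro ⟨⟨i, hi⟩, c, hc⟩ ⟨⟨j, hj⟩, d, hd⟩ h
    have hcd : c = d := funext fun k => congrFun (congrArg Subtype.val h) (k + 1)
    subst hcd
    have h1 := hc.start.symm.trans hd.start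
    rw [conj_add_single, conj_add_single] at h1
    have h2 : x i = x j := by
      have h3 := congrFun (add_left_cancel h1) (x i)
      by_contra hne
      simp [hne] at h3
    obtain rfl := eq_of_monotone_add_single hi hj h2
    rfl
  · rintro ⟨c, hc⟩
    obtain ⟨r, hr⟩ := hc.step 0 (Nat.succ_pos n)
    have h1 := hc.antitone 1 (by omega)
    have h2 := hc.zero_le 1 (by omega)
    rw [hc.start, zero_add] at hr
    rw [hr] at h1 h2
    obtain ⟨j, hj, rfl⟩ := exists_monotone_add_single hx h1 h2
    rw [← conj_add_single] at hr
    refine ⟨⟨⟨j, hj⟩, fun k => c (k + 1), hr ▸ hc.tail⟩, Subtype.ext (funext fun k => ?_)⟩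
    rcases k with _ | k
    · exact hc.start.symm
    · rfl

open Classical in
lemma card_boxChain {m : ℕ} (n : ℕ) (x : Fin m → ℕ) (hx : Monotone x) :
    Finite {c // BoxChain m n (conj x) c} ∧ (Nat.card {c // BoxChain m n (conj x) c} : ℝ) =
      walkSum (fun x => if ∀ i, Even (x i) then 1 else 0) n x := by
  induction n generalizing x with
  | zero =>
    have huniq : ∀ c, BoxChain m 0 (conj x) c → c = fun _ => conj x := fun c hc =>
      funext fun j => (hc.stable j (Nat.zero_le j)).trans hc.start
    have hsub : Subsingleton {c // BoxChain m 0 (conj x) c} :=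
      ⟨fun c d => Subtype.ext ((huniq _ c.2).trans (huniq _ d.2).symm)⟩
    refine ⟨inferInstance, ?_⟩
    simp only [walkSum]
    split_ifs with h
    · have : Nonempty {c // BoxChain m 0 (conj x) c} :=
        ⟨⟨fun _ => conj x, rfl, by simp, fun _ _ => conj_antitone x, fun _ _ => rfl,
          conj_le x 0, forall_even_iff_conj.1 h⟩⟩
      rw [Nat.card_eq_one_iff_unique.2 ⟨hsub, this⟩, Nat.cast_one]
    · have : IsEmpty {c // BoxChain m 0 (conj x) c} := ⟨fun c => h <| forall_even_iff_conj.2 <| by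
        have := c.2.paired
        rwa [c.2.start] at this⟩
      rw [Nat.card_of_isEmpty, Nat.cast_zero]
  | succ n ih =>
    have hbij := bijective_boxChain_cons (n := n) hx
    have hfin : ∀ j : {j : Fin m // Monotone (x + Pi.single j 1)},
        Finite {c // BoxChain m n (conj (x + Pi.single j.1 1)) c} := fun j => (ih _ j.2).1
    refine ⟨Finite.of_surjective _ hbij.2, ?_⟩
    rw [← Nat.card_congr (Equiv.ofBijective _ hbij), Nat.card_sigma, Nat.cast_sum, walkSum,
      ← Finset.sum_filter,
      Finset.sum_subtype (p := fun j : Fin m => Monotone (x + Pi.single j 1)) _ fun j => by simp]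
    exact Finset.sum_congr rfl fun j _ => (ih _ j.2).2

lemma fpfInvCount_eq_evenWalk (m n : ℕ) : (fpfInvCount n m : ℝ) = evenWalk m (2 * n) := by
  rw [fpfInvCount_eq_card_boxChain, ← conj_zero m]
  exact (card_boxChain (2 * n) 0 monotone_const).2

end

/-- For `l > 0`: `Σ_{n≥0} f^O_{n,2l} · t^{2n}/(2n)!
 = (1/2)·[ (1/2)·det_{0≤j,k<l}( I_{j−k}(2t) + I_{j+k}(2t) )
          + det_{0≤j,k<l−1}( I_{j−k}(2t) − I_{j+k+2}(2t) ) ]`. -/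
theorem fO_gf_eq_bessel_dets (l : ℕ) (hl : 0 < l) (t : ℝ) :
    ∑' n : ℕ, (fpfInvCount n (2 * l) : ℝ) * t ^ (2 * n) / (Nat.factorial (2 * n) : ℝ) =
      (1 / 2) *
        ((1 / 2) * Matrix.det (Matrix.of fun j k : Fin l =>
            besselI ((j : ℕ) - (k : ℕ) : ℤ) t + besselI ((j : ℕ) + (k : ℕ) : ℤ) t) +
          Matrix.det (Matrix.of fun j k : Fin (l - 1) =>
            besselI ((j : ℕ) - (k : ℕ) : ℤ) t -
              besselI ((j : ℕ) + (k : ℕ) + 2 : ℤ) t)) := by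
  simp_rw [fpfInvCount_eq_evenWalk]
  exact tsum_evenWalk l hl t
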